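/- The Weak Diagonal Lemma implies Rosser's Theorem: if T is a consistent recursively enumerable extension of Robinson's arithmetic such that for every formula Ψ(x) some sentence θ makes T + (Ψ(⌜θ⌝) ↔ θ) consistent, then there exists a sentence independent from T. -/

import Mathlib

open FirstOrder Language

/-- Function symbols of the language of arithmetic: 0, 1, +, ×. -/
inductive ArithFunc : ℕ → Type
  | zero : ArithFunc 0
  | one : ArithFunc 0
  | add : ArithFunc 2
  | mul : ArithFunc 2

/-- Relation symbols of the language of arithmetic: <. -/
inductive ArithRel : ℕ → Type
  | lt : ArithRel 2

/-- The first-order language of arithmetic. -/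
def LA : FirstOrder.Language := ⟨ArithFunc, ArithRel⟩

/-- The standard model ℕ of arithmetic. -/
instance : LA.Structure ℕ where
  funMap := fun {_} f => match f with
    | .zero => fun _ => 0
    | .one => fun _ => 1
    | .add => fun v => v 0 + v 1
    | .mul => fun v => v 0 * v 1
  RelMap := fun {_} r => match r with
    | .lt => fun v => v 0 < v 1

instance : Encodable (Σ n, LA.Functions n) :=
  Encodable.ofEquiv (Fin 4)
    { toFun := fun f => match f with
        | ⟨0, .zero⟩ => 0
        | ⟨0, .one⟩ => 1
        | ⟨2, .add⟩ => 2
        | ⟨2, .mul⟩ => 3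
      invFun := fun i => match i with
        | 0 => ⟨0, .zero⟩
        | 1 => ⟨0, .one⟩
        | 2 => ⟨2, .add⟩
        | 3 => ⟨2, .mul⟩
      left_inv := by rintro ⟨n, f⟩ <;> cases f <;> rfl
      right_inv := by intro i; fin_cases i <;> rfl }

instance : Encodable (Σ n, LA.Relations n) :=
  Encodable.ofEquiv (Fin 1)
    { toFun := fun f => match f with
        | ⟨2, .lt⟩ => 0
      invFun := fun _ => ⟨2, .lt⟩
      left_inv := by rintro ⟨n, r⟩; cases r; rfl
      right_inv := by intro i; fin_cases i; rfl }

/-- A canonical (computable, injective) Gödel numbering `⌜·⌝` of sentences,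
via Mathlib's list encoding of first-order formulas. -/
def godelCode (φ : LA.Sentence) : ℕ :=
  Encodable.encode φ.listEncode

/-- The numeral `n̄`: `0̄ = 0`, `1̄ = 1`, `(m+1)̄ = 1 + m̄`. -/
def numeral (α : Type) : ℕ → LA.Term α
  | 0 => Constants.term ArithFunc.zero
  | 1 => Constants.term ArithFunc.one
  | n + 2 => Functions.apply₂ (L := LA) ArithFunc.add
      (Constants.term ArithFunc.one) (numeral α (n + 1))

/-- `ℕ ⊨ Ψ(⌜θ⌝)`: the formula `Ψ(x)` holds in the standard model ℕ at the
Gödel code of the sentence `θ`. -/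
def RealizeAtCode (Ψ : LA.Formula (Fin 1)) (θ : LA.Sentence) : Prop :=
  Ψ.Realize (M := ℕ) (fun _ => (godelCode θ : ℕ))

/-- A theory is consistent iff it does not prove (have as a consequence) falsum. -/
def Consistent (T : LA.Theory) : Prop :=
  ¬ (T ⊨ᵇ (⊥ : LA.Sentence))

/-- The sentence `Ψ(⌜θ⌝) ↔ θ`. -/
def diagBicond (Ψ : LA.Formula (Fin 1)) (θ : LA.Sentence) : LA.Sentence :=
  (Ψ.subst (fun _ => numeral Empty (godelCode θ))) ⇔ θ

/-- The term `t + 1` (successor). -/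
def succT {α : Type} {n : ℕ} (t : LA.Term (α ⊕ Fin n)) : LA.Term (α ⊕ Fin n) :=
  Functions.apply₂ (L := LA) ArithFunc.add t (Constants.term ArithFunc.one)

/-- The term `0`. -/
def zeroT {α : Type} {n : ℕ} : LA.Term (α ⊕ Fin n) := Constants.term (L := LA) ArithFunc.zero

/-- The term `t + s`. -/
def addT {α : Type} {n : ℕ} (t s : LA.Term (α ⊕ Fin n)) : LA.Term (α ⊕ Fin n) :=
  Functions.apply₂ (L := LA) ArithFunc.add t s

/-- The term `t * s`. -/
def mulT {α : Type} {n : ℕ} (t s : LA.Term (α ⊕ Fin n)) : LA.Term (α ⊕ Fin n) :=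
  Functions.apply₂ (L := LA) ArithFunc.mul t s

/-- The atomic formula `t < s`. -/
def ltF {α : Type} {n : ℕ} (t s : LA.Term (α ⊕ Fin n)) : LA.BoundedFormula α n :=
  Relations.boundedFormula₂ (L := LA) ArithRel.lt t s

/-- Robinson's arithmetic Q. -/
def Q : LA.Theory :=
  { ∀' ∼(succT &0 =' zeroT),
    ∀' ∀' (succT &0 =' succT &1 ⟹ &0 =' &1),
    ∀' (∼(&0 =' zeroT) ⟹ ∃' (&0 =' succT &1)),
    ∀' (addT &0 zeroT =' &0),
    ∀' ∀' (addT &0 (succT &1) =' succT (addT &0 &1)),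
    ∀' (mulT &0 zeroT =' zeroT),
    ∀' ∀' (mulT &0 (succT &1) =' addT (mulT &0 &1) &0),
    ∀' ∀' (ltF &0 &1 ⇔ ∃' (addT &0 (succT &2) =' &1)) }

/-- A theory is recursively enumerable iff its set of Gödel codes is the domain
of a partial recursive function. -/
def RETheory (T : LA.Theory) : Prop :=
  ∃ f : ℕ →. Unit, Partrec f ∧ ∀ φ : LA.Sentence, φ ∈ T ↔ (f (godelCode φ)).Dom


section QModels
variable (M : Type) [LA.Structure M]

def mz : M := Structure.funMap (L := LA) (M := M) ArithFunc.zero ![]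
def mo : M := Structure.funMap (L := LA) (M := M) ArithFunc.one ![]
variable {M}
def ma (a b : M) : M := Structure.funMap (L := LA) (M := M) ArithFunc.add ![a, b]
def mm (a b : M) : M := Structure.funMap (L := LA) (M := M) ArithFunc.mul ![a, b]
variable (M)
def iot : ℕ → M
  | 0 => mz M
  | n + 1 => ma (iot n) (mo M)

variable {M}

theorem realize_zeroc {α : Type} (v : α → M) :
    Term.realize v (Constants.term (L := LA) ArithFunc.zero : LA.Term α) = mz M := by
  simp only [Constants.term, Term.realize, mz]
  congr 1
  exact Subsingleton.elim _ _

theorem realize_onec {α : Type} (v : α → M) :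
    Term.realize v (Constants.term (L := LA) ArithFunc.one : LA.Term α) = mo M := by
  simp only [Constants.term, Term.realize, mo]
  congr 1
  exact Subsingleton.elim _ _

theorem realize_add2 {α : Type} (v : α → M) (t s : LA.Term α) :
    Term.realize v (Functions.apply₂ (L := LA) ArithFunc.add t s) =
      ma (t.realize v) (s.realize v) := by
  exact Term.realize_functions_apply₂

theorem realize_mul2 {α : Type} (v : α → M) (t s : LA.Term α) :
    Term.realize v (Functions.apply₂ (L := LA) ArithFunc.mul t s) =
      mm (t.realize v) (s.realize v) := by
  exact Term.realize_functions_apply₂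

structure QAx (M : Type) [LA.Structure M] : Prop where
  s_ne : ∀ x : M, ma x (mo M) ≠ mz M
  s_inj : ∀ x y : M, ma x (mo M) = ma y (mo M) → x = y
  s_ex : ∀ x : M, x ≠ mz M → ∃ y, x = ma y (mo M)
  add_z : ∀ x : M, ma x (mz M) = x
  add_s : ∀ x y : M, ma x (ma y (mo M)) = ma (ma x y) (mo M)
  mul_z : ∀ x : M, mm x (mz M) = mz M
  mul_s : ∀ x y : M, mm x (ma y (mo M)) = ma (mm x y) x

theorem qax_of_model (h : M ⊨ Q) : QAx M := by
  have h' : ∀ φ ∈ Q, M ⊨ φ := fun φ hφ => h.realize_of_mem φ hφ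
  simp only [Q, Set.mem_insert_iff, Set.mem_singleton_iff, forall_eq_or_imp, forall_eq] at h'
  obtain ⟨h1, h2, h3, h4, h5, h6, h7, -⟩ := h'
  simp only [Sentence.Realize, Formula.Realize, succT, zeroT, addT, mulT,
    BoundedFormula.realize_all, BoundedFormula.realize_not,
    BoundedFormula.realize_bdEqual, BoundedFormula.realize_imp, BoundedFormula.realize_ex,
    realize_add2, realize_mul2, realize_zeroc, realize_onec
   ] at h1 h2 h3 h4 h5 h6 h7
  exact ⟨h1, h2, h3, h4, h5, h6, h7⟩

namespace QAx

theorem o_eq (q : QAx M) : ma (mz M) (mo M) = mo M := by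
  have h1 : mo M ≠ mz M := by
    intro h
    have := q.s_ne (mz M)
    rw [h, q.add_z] at this
    exact this rfl
  obtain ⟨y, hy⟩ := q.s_ex _ h1
  by_cases hy0 : y = mz M
  · rw [hy0] at hy; exact hy.symm
  · exfalso
    obtain ⟨z, hz⟩ := q.s_ex _ hy0
    have h2 : ma (mz M) (mo M) = ma (ma (mz M) y) (mo M) := by
      rw [← q.add_s, ← hy]
    have h3 := q.s_inj _ _ h2
    rw [hz, q.add_s] at h3
    exact q.s_ne _ h3.symm

theorem iot_one (q : QAx M) : iot M 1 = mo M := q.o_eq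

theorem iot_add (q : QAx M) (a b : ℕ) : ma (iot M a) (iot M b) = iot M (a + b) := by
  induction b with
  | zero => exact q.add_z _
  | succ b ih =>
    show ma (iot M a) (ma (iot M b) (mo M)) = ma (iot M (a + b)) (mo M)
    rw [q.add_s, ih]

theorem iot_mul (q : QAx M) (a b : ℕ) : mm (iot M a) (iot M b) = iot M (a * b) := by
  induction b with
  | zero => exact q.mul_z _
  | succ b ih =>
    show mm (iot M a) (ma (iot M b) (mo M)) = _
    rw [q.mul_s, ih, q.iot_add]
    rfl

theorem iot_inj (q : QAx M) {a b : ℕ} (h : iot M a = iot M b) : a = b := by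
  induction a generalizing b with
  | zero =>
    cases b with
    | zero => rfl
    | succ b => exact absurd h.symm (q.s_ne _)
  | succ a ih =>
    cases b with
    | zero => exact absurd h (q.s_ne _)
    | succ b => rw [ih (q.s_inj _ _ h)]

theorem numeral_eq (q : QAx M) {α : Type} (v : α → M) : ∀ n, (numeral α n).realize v = iot M n
  | 0 => realize_zeroc v
  | 1 => by rw [numeral, realize_onec, q.iot_one]
  | n + 2 => by
    rw [numeral, realize_add2, realize_onec, numeral_eq q v (n + 1), ← q.iot_one, q.iot_add]
    congr 1
    omega

/-- initial segment -/
theorem lt_iot (q : QAx M) {m : M} {b : ℕ} (h : ∃ z, ma (ma z (mo M)) m = iot M b) :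
    ∃ k < b, m = iot M k := by
  induction b generalizing m with
  | zero =>
    obtain ⟨z, hz⟩ := h
    by_cases hm : m = mz M
    · rw [hm, q.add_z] at hz
      exact absurd hz (q.s_ne _)
    · obtain ⟨m', rfl⟩ := q.s_ex _ hm
      rw [q.add_s] at hz
      exact absurd hz (q.s_ne _)
  | succ b ih =>
    obtain ⟨z, hz⟩ := h
    by_cases hm : m = mz M
    · exact ⟨0, by omega, hm⟩
    · obtain ⟨m', rfl⟩ := q.s_ex _ hm
      rw [q.add_s] at hz
      obtain ⟨k, hk, rfl⟩ := ih ⟨z, q.s_inj _ _ hz⟩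
      exact ⟨k + 1, by omega, rfl⟩

theorem iot_lt (q : QAx M) {a b : ℕ} (h : a < b) : ∃ z, ma (ma z (mo M)) (iot M a) = iot M b := by
  obtain ⟨c, rfl⟩ := Nat.exists_eq_add_of_lt h
  refine ⟨iot M c, ?_⟩
  show ma (iot M (c + 1)) _ = _
  rw [q.iot_add]
  congr 1
  omega

theorem tri (q : QAx M) (m : M) (b : ℕ) : (∃ k ≤ b, m = iot M k) ∨ ∃ z, ma (ma z (mo M)) (iot M b) = m := by
  induction b generalizing m with
  | zero =>
    by_cases hm : m = mz M
    · exact .inl ⟨0, le_rfl, hm⟩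
    · obtain ⟨m', rfl⟩ := q.s_ex _ hm
      exact .inr ⟨m', q.add_z _⟩
  | succ b ih =>
    by_cases hm : m = mz M
    · exact .inl ⟨0, by omega, hm⟩
    · obtain ⟨m', rfl⟩ := q.s_ex _ hm
      rcases ih m' with ⟨k, hk, rfl⟩ | ⟨z, hz⟩
      · exact .inl ⟨k + 1, by omega, rfl⟩
      · refine .inr ⟨z, ?_⟩
        show ma _ (ma (iot M b) (mo M)) = _
        rw [q.add_s, hz]

end QAx
end QModels


/-- prepend a value to an assignment -/
def cns {M : Type} (x : M) (v : ℕ → M) : ℕ → M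
  | 0 => x
  | n + 1 => v n

def Tm (f : (ℕ → ℕ) → ℕ) : Prop :=
  ∃ t : LA.Term ℕ, ∀ (M : Type) [LA.Structure M], QAx M → ∀ v : ℕ → ℕ,
    t.realize (fun i => iot M (v i)) = iot M (f v)

def D0 (R : (ℕ → ℕ) → Prop) : Prop :=
  ∃ φ : LA.Formula ℕ, ∀ (M : Type) [LA.Structure M], QAx M → ∀ v : ℕ → ℕ,
    φ.Realize (fun i => iot M (v i)) ↔ R v

theorem Tm.var (i : ℕ) : Tm (fun v => v i) := ⟨Term.var i, fun _ _ _ _ => rfl⟩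

theorem Tm.const (n : ℕ) : Tm (fun _ => n) := ⟨numeral ℕ n, fun _ _ q _ => q.numeral_eq _ n⟩

theorem Tm.add {f g} (hf : Tm f) (hg : Tm g) : Tm (fun v => f v + g v) := by
  obtain ⟨t, ht⟩ := hf
  obtain ⟨s, hs⟩ := hg
  exact ⟨Functions.apply₂ (L := LA) ArithFunc.add t s, fun M _ q v => by
    rw [realize_add2, ht M q, hs M q, q.iot_add]⟩

theorem Tm.mul {f g} (hf : Tm f) (hg : Tm g) : Tm (fun v => f v * g v) := by
  obtain ⟨t, ht⟩ := hf
  obtain ⟨s, hs⟩ := hg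
  exact ⟨Functions.apply₂ (L := LA) ArithFunc.mul t s, fun M _ q v => by
    rw [realize_mul2, ht M q, hs M q, q.iot_mul]⟩

/-- bind variable 0 -/
noncomputable def allF (φ : LA.Formula ℕ) : LA.Formula ℕ :=
  (φ.relabel (fun i => match i with
    | 0 => Sum.inr ()
    | n + 1 => Sum.inl n) : LA.Formula (ℕ ⊕ Unit)).iAlls Unit

theorem realize_allF {M : Type} [LA.Structure M] (φ : LA.Formula ℕ) (v : ℕ → M) :
    (allF φ).Realize v ↔ ∀ x, φ.Realize (cns x v) := by
  rw [allF, Formula.realize_iAlls]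
  simp only [Formula.realize_relabel]
  constructor
  · intro h x
    convert h (fun _ => x) using 1
    funext i
    cases i <;> rfl
  · intro h i
    convert h (i ()) using 1
    funext i
    cases i <;> rfl

noncomputable def exF (φ : LA.Formula ℕ) : LA.Formula ℕ := ∼(allF ∼φ)

theorem realize_exF {M : Type} [LA.Structure M] (φ : LA.Formula ℕ) (v : ℕ → M) :
    (exF φ).Realize v ↔ ∃ x, φ.Realize (cns x v) := by
  simp [exF, realize_allF]

/-- `x < y` as `∃ z, (z+1)+x = y` -/
noncomputable def ltV (i j : ℕ) : LA.Formula ℕ :=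
  exF (Term.equal (Functions.apply₂ (L := LA) ArithFunc.add
    (Functions.apply₂ (L := LA) ArithFunc.add (Term.var 0)
      (Constants.term (L := LA) ArithFunc.one)) (Term.var (i + 1))) (Term.var (j + 1)))

theorem realize_ltV {M : Type} [LA.Structure M] (i j : ℕ) (v : ℕ → M) :
    (ltV i j).Realize v ↔ ∃ z, ma (ma z (mo M)) (v i) = v j := by
  simp only [ltV, realize_exF, Formula.realize_equal, realize_add2, realize_onec,
    Term.realize_var]
  rfl

theorem cns_iot {M : Type} [LA.Structure M] (x : ℕ) (v : ℕ → ℕ) :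
    cns (iot M x) (fun i => iot M (v i)) = fun i => iot M (cns x v i) := by
  funext i; cases i <;> rfl

theorem D0.eq {f g} (hf : Tm f) (hg : Tm g) : D0 (fun v => f v = g v) := by
  obtain ⟨t, ht⟩ := hf
  obtain ⟨s, hs⟩ := hg
  refine ⟨Term.equal t s, fun M _ q v => ?_⟩
  rw [Formula.realize_equal, ht M q, hs M q]
  exact ⟨fun h => q.iot_inj h, fun h => congrArg _ h⟩

theorem D0.not {R} (h : D0 R) : D0 (fun v => ¬ R v) := by
  obtain ⟨φ, h⟩ := h
  exact ⟨∼φ, fun M _ q v => by rw [Formula.realize_not, h M q]⟩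

theorem D0.imp {R S} (h : D0 R) (h' : D0 S) : D0 (fun v => R v → S v) := by
  obtain ⟨φ, h⟩ := h
  obtain ⟨ψ, h'⟩ := h'
  exact ⟨φ.imp ψ, fun M _ q v => by rw [Formula.realize_imp, h M q, h' M q]⟩

theorem D0.of_iff {R S} (h : D0 R) (e : ∀ v, R v ↔ S v) : D0 S := by
  obtain ⟨φ, h⟩ := h
  exact ⟨φ, fun M _ q v => (h M q v).trans (e v)⟩

theorem D0.and {R S} (h : D0 R) (h' : D0 S) : D0 (fun v => R v ∧ S v) :=
  (h.imp h'.not).not.of_iff (fun v => by tauto)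

theorem D0.or {R S} (h : D0 R) (h' : D0 S) : D0 (fun v => R v ∨ S v) :=
  (h.not.imp h').of_iff (fun v => by tauto)

theorem D0.ball {R} (h : D0 R) (k : ℕ) : D0 (fun v => ∀ x < v k, R (cns x v)) := by
  obtain ⟨φ, h⟩ := h
  refine ⟨allF ((ltV 0 (k + 1)).imp φ), fun M _ q v => ?_⟩
  simp only [realize_allF, Formula.realize_imp, realize_ltV]
  constructor
  · intro H x hx
    rw [← h M q, ← cns_iot]
    exact H _ (q.iot_lt hx)
  · intro H m hm
    obtain ⟨x, hx, hmx⟩ := q.lt_iot hm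
    replace hmx : m = iot M x := hmx
    rw [hmx, cns_iot, h M q]
    exact H x hx

theorem D0.bex {R} (h : D0 R) (k : ℕ) : D0 (fun v => ∃ x < v k, R (cns x v)) :=
  (h.not.ball k).not.of_iff (fun v => by push Not; rfl)

theorem D0.sub {R} (h : D0 R) (f : ℕ → (ℕ → ℕ) → ℕ) (hf : ∀ i, Tm (f i)) :
    D0 (fun v => R (fun i => f i v)) := by
  obtain ⟨φ, h⟩ := h
  choose t ht using hf
  refine ⟨φ.subst t, fun M _ q v => ?_⟩
  show _ ↔ R (fun i => f i v)
  rw [← h M q, Formula.Realize, BoundedFormula.realize_subst]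
  simp only [ht _ M q]
  rfl

theorem D0.ren {R} (h : D0 R) (σ : ℕ → ℕ) : D0 (fun v => R (fun i => v (σ i))) :=
  h.sub _ (fun i => Tm.var (σ i))

def Sg (R : (ℕ → ℕ) → Prop) : Prop :=
  ∃ D, D0 D ∧ ∀ v, R v ↔ ∃ y, D (cns y v)

theorem Sg.of_iff {R S} (h : Sg R) (e : ∀ v, R v ↔ S v) : Sg S := by
  obtain ⟨D, h, h'⟩ := h
  exact ⟨D, h, fun v => (e v).symm.trans (h' v)⟩

theorem D0.sg {R} (h : D0 R) : Sg R :=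
  ⟨_, h.ren Nat.succ, fun _ => ⟨fun h => ⟨0, h⟩, fun ⟨_, h⟩ => h⟩⟩

/-- renaming under one binder: keep 0, shift everything else by `k` -/
theorem Sg.ren {R} (h : Sg R) (σ : ℕ → ℕ) : Sg (fun v => R (fun i => v (σ i))) := by
  obtain ⟨D, h, h'⟩ := h
  refine ⟨_, h.ren (cns 0 (fun i => σ i + 1)), fun v => (h' _).trans ?_⟩
  have : ∀ y, cns y (fun i => v (σ i)) =
      fun i => cns y v (cns 0 (fun i => σ i + 1) i) := by
    intro y; funext i; cases i <;> rfl
  simp only [this]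

theorem Sg.ex {R} (h : Sg R) : Sg (fun v => ∃ x, R (cns x v)) := by
  obtain ⟨D, h, h'⟩ := h
  -- context of inner formula: y x w v ; D expects y x v
  refine ⟨_, ((h.ren (cns 0 (cns 1 (fun i => i + 3)))).bex 1).bex 0, fun v => ?_⟩
  have e : ∀ y x w : ℕ, (fun i => cns y (cns x (cns w v)) (cns 0 (cns 1 (fun i => i + 3)) i)) =
      cns y (cns x v) := by
    intro y x w; funext i; rcases i with _ | _ | i <;> rfl
  simp only [e, h']
  constructor
  · rintro ⟨x, y, hD⟩
    exact ⟨max x y + 1, x, by show x < max x y + 1; omega, y, by show y < max x y + 1; omega, hD⟩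
  · rintro ⟨w, x, -, y, -, hD⟩
    exact ⟨x, y, hD⟩

theorem Sg.ball {R} (h : Sg R) (k : ℕ) : Sg (fun v => ∀ x < v k, R (cns x v)) := by
  obtain ⟨D, h, h'⟩ := h
  refine ⟨_, ((h.ren (cns 0 (cns 1 (fun i => i + 3)))).bex 1).ball (k + 1), fun v => ?_⟩
  have e : ∀ y x w : ℕ, (fun i => cns y (cns x (cns w v)) (cns 0 (cns 1 (fun i => i + 3)) i)) =
      cns y (cns x v) := by
    intro y x w; funext i; rcases i with _ | _ | i <;> rfl
  simp only [e, h']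
  constructor
  · intro H
    choose! y hy using H
    refine ⟨(Finset.range (v k)).sup y + 1, fun x hx => ⟨y x, ?_, hy x hx⟩⟩
    exact Nat.lt_succ_of_le (Finset.le_sup (f := y) (Finset.mem_range.2 hx))
  · rintro ⟨w, H⟩ x hx
    obtain ⟨y, -, hD⟩ := H x hx
    exact ⟨y, hD⟩

theorem Sg.and {R S} (h : Sg R) (h' : Sg S) : Sg (fun v => R v ∧ S v) := by
  obtain ⟨D, hD, hR⟩ := h
  obtain ⟨E, hE, hS⟩ := h'
  have h1 : Sg (fun v => ∃ x, ∃ y, D (cns x v) ∧ E (cns y v)) := by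
    have := ((hD.ren (cns 1 (fun i => i + 2))).and (hE.ren (cns 0 (fun i => i + 2)))).sg.ex.ex
    refine this.of_iff (fun v => ?_)
    have e : ∀ y x : ℕ, (fun i => cns y (cns x v) (cns 1 (fun i => i + 2) i)) = cns x v := by
      intro y x; funext i; cases i <;> rfl
    have e' : ∀ y x : ℕ, (fun i => cns y (cns x v) (cns 0 (fun i => i + 2) i)) = cns y v := by
      intro y x; funext i; cases i <;> rfl
    simp only [e, e']
  refine h1.of_iff (fun v => ?_)
  rw [hR, hS]
  simp

theorem Sg.or {R S} (h : Sg R) (h' : Sg S) : Sg (fun v => R v ∨ S v) := by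
  obtain ⟨D, hD, hR⟩ := h
  obtain ⟨E, hE, hS⟩ := h'
  refine ((hD.or hE).sg.ex).of_iff (fun v => ?_)
  rw [hR, hS, exists_or]

/-- Rosser separation. -/
theorem rosser_sep {A B : ℕ → Prop} (hA : Sg (fun v => A (v 0))) (hB : Sg (fun v => B (v 0)))
    (hAB : ∀ n, A n → ¬ B n) :
    ∃ Ψ : LA.Formula (Fin 1), ∀ (M : Type) [LA.Structure M], QAx M → ∀ n,
      (A n → Ψ.Realize (fun _ => iot M n)) ∧ (B n → ¬ Ψ.Realize (fun _ => iot M n)) := by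
  obtain ⟨D, hD, hA⟩ := hA
  obtain ⟨E, hE, hB⟩ := hB
  -- context of hE: y n ; under the bounded quantifier: z y n
  obtain ⟨δ, hδ⟩ := hD
  obtain ⟨ε, hε⟩ := hE
  let ε' : LA.Formula ℕ := ε.relabel (fun i : ℕ => match i with
    | 0 => 0
    | i + 1 => i + 2)
  let Φ : LA.Formula ℕ := exF (δ ⊓ allF ((ltV 0 1).imp ∼ε'))
  refine ⟨Φ.relabel (fun _ => (0 : Fin 1)), fun M _ q n => ?_⟩
  have hΦ : (Φ.relabel (fun _ => (0 : Fin 1))).Realize (fun _ => iot M n) ↔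
      ∃ y : M, δ.Realize (cns y (fun _ => iot M n)) ∧
        ∀ z : M, (∃ u, ma (ma u (mo M)) z = y) → ¬ ε.Realize (cns z (fun _ => iot M n)) := by
    simp only [Φ, ε', Formula.realize_relabel, realize_exF, realize_allF, Formula.realize_inf,
      Formula.realize_imp, Formula.realize_not, realize_ltV]
    have e : ∀ y z : M, (cns z (cns y ((fun _ => iot M n) ∘ fun _ => (0 : Fin 1))) ∘
        fun i : ℕ => match i with
          | 0 => 0
          | i + 1 => i + 2) = cns z (fun _ => iot M n) := by
      intro y z; funext i; cases i <;> rfl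
    simp only [e]
    rfl
  have key1 : ∀ y, δ.Realize (cns (iot M y) (fun _ => iot M n)) ↔ D (cns y fun _ => n) := by
    intro y
    rw [← hδ M q, ← cns_iot]
  have key2 : ∀ y, ε.Realize (cns (iot M y) (fun _ => iot M n)) ↔ E (cns y fun _ => n) := by
    intro y
    rw [← hε M q, ← cns_iot]
  rw [hΦ]
  constructor
  · intro hn
    obtain ⟨y, hy⟩ := (hA (fun _ => n)).1 hn
    refine ⟨iot M y, (key1 y).2 hy, fun z hz hzE => ?_⟩
    obtain ⟨k, -, rfl⟩ := q.lt_iot hz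
    exact hAB n hn ((hB (fun _ => n)).2 ⟨k, (key2 k).1 hzE⟩)
  · rintro hn ⟨y, hy, hz⟩
    obtain ⟨b, hb⟩ := (hB (fun _ => n)).1 hn
    rcases q.tri y b with ⟨k, -, rfl⟩ | h
    · exact hAB n ((hA (fun _ => n)).2 ⟨k, (key1 k).1 hy⟩) hn
    · exact hz _ h ((key2 b).2 hb)


theorem D0.lt (i j : ℕ) : D0 (fun v => v i < v j) :=
  ((D0.eq (Tm.var 0) (Tm.var (i + 1))).bex j).of_iff (fun v => by
    show (∃ x < v j, x = v i) ↔ _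
    constructor
    · rintro ⟨x, h, rfl⟩; exact h
    · intro h; exact ⟨_, h, rfl⟩)

theorem D0.le (i j : ℕ) : D0 (fun v => v i ≤ v j) :=
  (D0.lt j i).not.of_iff (fun v => by simp)

/-- `v 0 = pair (v 1) (v 2)` -/
theorem D0.pair : D0 (fun v => v 0 = Nat.pair (v 1) (v 2)) := by
  have := ((D0.lt 1 2).and (D0.eq (Tm.var 0)
    (((Tm.var 2).mul (Tm.var 2)).add (Tm.var 1)))).or
    ((D0.lt 1 2).not.and (D0.eq (Tm.var 0)
    ((((Tm.var 1).mul (Tm.var 1)).add (Tm.var 1)).add (Tm.var 2))))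
  refine this.of_iff (fun v => ?_)
  unfold Nat.pair
  split_ifs with h <;> simp [h]

theorem D0.pair' (i j k : ℕ) : D0 (fun v => v i = Nat.pair (v j) (v k)) :=
  D0.pair.ren (cns i (cns j (fun _ => k)))

/-- `v 0 = beta (v 1) (v 2)` -/
theorem Sg.beta : Sg (fun v => v 0 = Nat.beta (v 1) (v 2)) := by
  -- b a y c i : c = pair a b, ∃ q, a = q * ((i+1)*b+1) + y, y < (i+1)*b+1
  -- context m q b a y c i
  have h : D0 (fun v => v 5 = Nat.pair (v 3) (v 2) ∧ v 0 = (v 6 + 1) * v 2 + 1 ∧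
      v 3 = v 1 * v 0 + v 4 ∧ v 4 < v 0) :=
    (D0.pair' 5 3 2).and ((D0.eq (Tm.var 0)
      ((((Tm.var 6).add (Tm.const 1)).mul (Tm.var 2)).add (Tm.const 1))).and
      ((D0.eq (Tm.var 3) (((Tm.var 1).mul (Tm.var 0)).add (Tm.var 4))).and (D0.lt 4 0)))
  refine h.sg.ex.ex.ex.ex.of_iff (fun v => ?_)
  show (∃ a b q m, v 1 = Nat.pair a b ∧ m = (v 2 + 1) * b + 1 ∧ a = q * m + v 0 ∧ v 0 < m) ↔ _
  constructor
  · rintro ⟨a, b, q, m, h1, h2, h3, h4⟩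
    rw [Nat.beta, h1]
    simp only [Nat.unpair_pair]
    rw [← h2, h3, Nat.mul_add_mod', Nat.mod_eq_of_lt h4]
  · intro h
    refine ⟨(v 1).unpair.1, (v 1).unpair.2,
      (v 1).unpair.1 / ((v 2 + 1) * (v 1).unpair.2 + 1), _, (Nat.pair_unpair _).symm, rfl, ?_, ?_⟩
    · rw [h, Nat.beta, Nat.div_add_mod']
    · rw [h, Nat.beta]
      exact Nat.mod_lt _ (Nat.succ_pos _)

theorem Sg.beta' (i j k : ℕ) : Sg (fun v => v i = Nat.beta (v j) (v k)) :=
  Sg.beta.ren (cns i (cns j (fun _ => k)))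

def SgF (f : ℕ →. ℕ) : Prop := Sg (fun v => v 1 ∈ f (v 0))

theorem SgF.at {f} (h : SgF f) (i j : ℕ) : Sg (fun v => v j ∈ f (v i)) :=
  Sg.ren h (cns i (fun _ => j))

theorem exists_beta (m : ℕ) (s : ℕ → ℕ) : ∃ c, ∀ i ≤ m, Nat.beta c i = s i := by
  refine ⟨Nat.unbeta ((List.range (m + 1)).map s), fun i hi => ?_⟩
  have := Nat.beta_unbeta_coe ((List.range (m + 1)).map s) ⟨i, by simp; omega⟩
  simpa using this

theorem prec_mem (f g : ℕ →. ℕ) (a n y : ℕ) :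
    y ∈ (Nat.rec (f a) (fun y IH => IH.bind fun i => g (Nat.pair a (Nat.pair y i))) n : Part ℕ) ↔
    ∃ s : ℕ → ℕ, s 0 ∈ f a ∧ (∀ i < n, s (i + 1) ∈ g (Nat.pair a (Nat.pair i (s i)))) ∧
      y = s n := by
  induction n generalizing y with
  | zero =>
    constructor
    · intro h; exact ⟨fun _ => y, h, by simp, rfl⟩
    · rintro ⟨s, h, -, rfl⟩; exact h
  | succ n ih =>
    simp only [Part.mem_bind_iff]
    constructor
    · rintro ⟨i, hi, hy⟩
      obtain ⟨s, h0, h1, rfl⟩ := (ih i).1 hi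
      refine ⟨fun j => if j ≤ n then s j else y, by simpa using h0, fun j hj => ?_, by simp⟩
      rcases Nat.lt_succ_iff_lt_or_eq.1 hj with hj | rfl
      · simpa [Nat.succ_le_of_lt hj, hj.le] using h1 j hj
      · simpa using hy
    · rintro ⟨s, h0, h1, rfl⟩
      exact ⟨s n, (ih _).2 ⟨s, h0, fun i hi => h1 i (by omega), rfl⟩, h1 n (by omega)⟩

theorem sgF_of_partrec {f : ℕ →. ℕ} (hf : Nat.Partrec f) : SgF f := by
  induction hf with
  | zero =>
    refine (D0.eq (Tm.var 1) (Tm.const 0)).sg.of_iff (fun v => ?_)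
    show _ ↔ v 1 ∈ Part.some 0
    simp
  | succ =>
    refine (D0.eq (Tm.var 1) ((Tm.var 0).add (Tm.const 1))).sg.of_iff (fun v => ?_)
    simp
  | left =>
    refine ((D0.pair' 1 2 0).sg.ex).of_iff (fun v => ?_)
    show (∃ x, v 0 = Nat.pair (v 1) x) ↔ _
    simp only [PFun.coe_val, Part.mem_some_iff]
    constructor
    · rintro ⟨x, h⟩; simp [h]
    · intro h; exact ⟨(v 0).unpair.2, by rw [h, Nat.pair_unpair]⟩
  | right =>
    refine ((D0.pair' 1 0 2).sg.ex).of_iff (fun v => ?_)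
    show (∃ x, v 0 = Nat.pair x (v 1)) ↔ _
    simp only [PFun.coe_val, Part.mem_some_iff]
    constructor
    · rintro ⟨x, h⟩; simp [h]
    · intro h; exact ⟨(v 0).unpair.1, by rw [h, Nat.pair_unpair]⟩
  | pair _ _ hf hg =>
    rename_i f g _ _
    -- b a x y
    refine (((D0.pair' 3 1 0).sg.and ((hf.at 2 1).and (hg.at 2 0))).ex.ex).of_iff (fun v => ?_)
    show (∃ a b, v 1 = Nat.pair a b ∧ a ∈ f (v 0) ∧ b ∈ g (v 0)) ↔ _
    simp only [Seq.seq, Part.map_eq_map, Part.mem_bind_iff, Part.mem_map_iff]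
    constructor
    · rintro ⟨a, b, h, ha, hb⟩
      exact ⟨_, ⟨a, ha, rfl⟩, b, hb, h.symm⟩
    · rintro ⟨_, ⟨a, ha, rfl⟩, b, hb, h⟩
      exact ⟨a, b, h.symm, ha, hb⟩
  | comp _ _ hf hg =>
    rename_i f g _ _
    refine (((hg.at 1 0).and (hf.at 0 2)).ex).of_iff (fun v => ?_)
    show (∃ z, z ∈ g (v 0) ∧ v 1 ∈ f z) ↔ _
    exact Part.mem_bind_iff.symm
  | prec _ _ hf hg =>
    rename_i f g _ _
    have h0 : Sg (fun v => ∃ z s0, z = 0 ∧ s0 = Nat.beta (v 0) z ∧ s0 ∈ f (v 2)) :=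
      ((D0.eq (Tm.var 1) (Tm.const 0)).sg.and ((Sg.beta' 0 2 1).and (hf.at 4 0))).ex.ex
    have h1 : Sg (fun v => ∀ i < v 1, ∃ i' si si' p p', i' = i + 1 ∧ si = Nat.beta (v 0) i ∧
        si' = Nat.beta (v 0) i' ∧ p = Nat.pair i si ∧ p' = Nat.pair (v 2) p ∧ si' ∈ g p') :=
      Sg.ball (R := fun v => ∃ i' si si' p p', i' = v 0 + 1 ∧ si = Nat.beta (v 1) (v 0) ∧
        si' = Nat.beta (v 1) i' ∧ p = Nat.pair (v 0) si ∧ p' = Nat.pair (v 3) p ∧ si' ∈ g p')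
      -- p' p si' si i' i c n a
      ((D0.eq (Tm.var 4) ((Tm.var 5).add (Tm.const 1))).sg.and
        ((Sg.beta' 3 6 5).and ((Sg.beta' 2 6 4).and ((D0.pair' 1 5 3).sg.and
          ((D0.pair' 0 8 1).sg.and (hg.at 0 2)))))).ex.ex.ex.ex.ex 1
    -- c n a x y
    refine (((D0.pair' 3 2 1).sg.and (h0.and (h1.and (Sg.beta' 4 0 1)))).ex.ex.ex).of_iff
      (fun v => ?_)
    show (∃ a n c, v 0 = Nat.pair a n ∧ (∃ z s0, z = 0 ∧ s0 = Nat.beta c z ∧ s0 ∈ f a) ∧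
      (∀ i < n, ∃ i' si si' p p', i' = i + 1 ∧ si = Nat.beta c i ∧
        si' = Nat.beta c i' ∧ p = Nat.pair i si ∧ p' = Nat.pair a p ∧ si' ∈ g p') ∧
        v 1 = Nat.beta c n) ↔ _
    have e := prec_mem f g (v 0).unpair.1 (v 0).unpair.2 (v 1)
    refine Iff.trans ?_ e.symm
    constructor
    · rintro ⟨a, n, c, h, ⟨z, s0, rfl, rfl, hs0⟩, H, hy⟩
      rw [h]
      simp only [Nat.unpair_pair]
      refine ⟨Nat.beta c, hs0, fun i hi => ?_, hy⟩
      obtain ⟨_, _, _, _, _, rfl, rfl, rfl, rfl, rfl, h⟩ := H i hi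
      exact h
    · rintro ⟨s, h0, h1, hy⟩
      obtain ⟨c, hc⟩ := exists_beta (v 0).unpair.2 s
      refine ⟨_, _, c, (Nat.pair_unpair _).symm, ⟨0, _, rfl, rfl, ?_⟩, fun i hi => ?_, ?_⟩
      · rw [hc 0 (Nat.zero_le _)]; exact h0
      · refine ⟨_, _, _, _, _, rfl, rfl, rfl, rfl, rfl, ?_⟩
        rw [hc i hi.le, hc (i + 1) hi]
        exact h1 i hi
      · rw [hc _ le_rfl]; exact hy
  | rfind _ hf =>
    rename_i f _
    have h0 : Sg (fun v => ∃ z p, z = 0 ∧ p = Nat.pair (v 0) (v 1) ∧ z ∈ f p) :=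
      ((D0.eq (Tm.var 1) (Tm.const 0)).sg.and ((D0.pair' 0 2 3).sg.and (hf.at 0 1))).ex.ex
    have h1 : Sg (fun v => ∀ i < v 1, ∃ k z p, z = k + 1 ∧ p = Nat.pair (v 0) i ∧ z ∈ f p) :=
      Sg.ball (R := fun v => ∃ k z p, z = k + 1 ∧ p = Nat.pair (v 1) (v 0) ∧ z ∈ f p)
      -- p z k i a n
      ((D0.eq (Tm.var 1) ((Tm.var 2).add (Tm.const 1))).sg.and
        ((D0.pair' 0 4 3).sg.and (hf.at 0 1))).ex.ex.ex 1
    refine (h0.and h1).of_iff (fun v => ?_)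
    refine Iff.trans ?_ Nat.mem_rfind.symm
    simp only [Part.map_eq_map, Part.mem_map_iff]
    refine and_congr ?_ (forall_congr' fun m => ?_)
    · simp
    · constructor
      · rintro h hm
        obtain ⟨k, _, _, rfl, rfl, h⟩ := h hm
        exact ⟨_, h, by simp⟩
      · intro h hm
        obtain ⟨a, ha, h2⟩ := h hm
        have : a ≠ 0 := by simpa using h2
        obtain ⟨k, rfl⟩ := Nat.exists_eq_succ_of_ne_zero this
        exact ⟨k, _, _, rfl, rfl, ha⟩

theorem sg_of_re {p : ℕ → Prop} (h : REPred p) (i : ℕ) : Sg (fun v => p (v i)) := by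
  have h1 := sgF_of_partrec h
  have h2 : Sg (fun v => ∃ z, z = 0 ∧ z ∈ (Part.assert (p (v i)) fun _ => Part.some 0)) := by
    refine ((D0.eq (Tm.var 0) (Tm.const 0)).sg.and (SgF.at h1 (i + 1) 0)).ex.of_iff (fun v => ?_)
    show (∃ z, z = 0 ∧ z ∈ _) ↔ _
    simp [cns, Part.mem_assert_iff]
    exact fun _ => ⟨(), rfl⟩
  refine h2.of_iff (fun v => ?_)
  simp [Part.mem_assert_iff]


attribute [fun_prop] Primrec

section prims
variable {α β γ σ : Type} [Primcodable α] [Primcodable β] [Primcodable γ] [Primcodable σ]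

@[fun_prop] theorem pr_id : Primrec (fun a : α => a) := Primrec.id
@[fun_prop] theorem pr_const (c : β) : Primrec (fun _ : α => c) := Primrec.const c
@[fun_prop] theorem pr_comp {f : β → γ} {g : α → β} (hf : Primrec f) (hg : Primrec g) :
    Primrec (fun a => f (g a)) := hf.comp hg
@[fun_prop] theorem pr_mk {f : α → β} {g : α → γ} (hf : Primrec f) (hg : Primrec g) :
    Primrec (fun a => (f a, g a)) := hf.pair hg
@[fun_prop] theorem pr_fst {f : α → β × γ} (hf : Primrec f) :
    Primrec (fun a => (f a).1) := Primrec.fst.comp hf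
@[fun_prop] theorem pr_snd {f : α → β × γ} (hf : Primrec f) :
    Primrec (fun a => (f a).2) := Primrec.snd.comp hf
@[fun_prop] theorem pr_add {f g : α → ℕ} (hf : Primrec f) (hg : Primrec g) :
    Primrec (fun a => f a + g a) := Primrec.nat_add.comp hf hg
@[fun_prop] theorem pr_sub {f g : α → ℕ} (hf : Primrec f) (hg : Primrec g) :
    Primrec (fun a => f a - g a) := Primrec.nat_sub.comp hf hg
@[fun_prop] theorem pr_mul {f g : α → ℕ} (hf : Primrec f) (hg : Primrec g) :
    Primrec (fun a => f a * g a) := Primrec.nat_mul.comp hf hg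
@[fun_prop] theorem pr_div {f g : α → ℕ} (hf : Primrec f) (hg : Primrec g) :
    Primrec (fun a => f a / g a) := Primrec.nat_div.comp hf hg
@[fun_prop] theorem pr_mod {f g : α → ℕ} (hf : Primrec f) (hg : Primrec g) :
    Primrec (fun a => f a % g a) := Primrec.nat_mod.comp hf hg
@[fun_prop] theorem pr_pair {f g : α → ℕ} (hf : Primrec f) (hg : Primrec g) :
    Primrec (fun a => Nat.pair (f a) (g a)) := Primrec₂.natPair.comp hf hg
@[fun_prop] theorem pr_unpair {f : α → ℕ} (hf : Primrec f) :
    Primrec (fun a => Nat.unpair (f a)) := Primrec.unpair.comp hf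
@[fun_prop] theorem pr_cons {f : α → β} {g : α → List β} (hf : Primrec f) (hg : Primrec g) :
    Primrec (fun a => f a :: g a) := Primrec.list_cons.comp hf hg
@[fun_prop] theorem pr_append {f : α → List β} {g : α → List β} (hf : Primrec f)
    (hg : Primrec g) : Primrec (fun a => f a ++ g a) := Primrec.list_append.comp hf hg
@[fun_prop] theorem pr_reverse {f : α → List β} (hf : Primrec f) :
    Primrec (fun a => (f a).reverse) := Primrec.list_reverse.comp hf
@[fun_prop] theorem pr_encode {f : α → β} (hf : Primrec f) :
    Primrec (fun a => Encodable.encode (f a)) := Primrec.encode.comp hf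
@[fun_prop] theorem pr_some {f : α → β} (hf : Primrec f) :
    Primrec (fun a => some (f a)) := Primrec.option_some.comp hf
@[fun_prop] theorem pr_inl {f : α → β} (hf : Primrec f) :
    Primrec (fun a => (Sum.inl (f a) : β ⊕ γ)) := Primrec.sumInl.comp hf
@[fun_prop] theorem pr_inr {f : α → γ} (hf : Primrec f) :
    Primrec (fun a => (Sum.inr (f a) : β ⊕ γ)) := Primrec.sumInr.comp hf
@[fun_prop] theorem pr_getD {f : α → List β} {g : α → ℕ} (d : β) (hf : Primrec f)
    (hg : Primrec g) : Primrec (fun a => (f a).getD (g a) d) :=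
  (Primrec.list_getD d).comp hf hg

/-- branch on a number being zero -/
def sel (n : ℕ) (x y : σ) : σ := if n = 0 then x else y

@[fun_prop] theorem pr_sel {f : α → ℕ} {g h : α → σ} (hf : Primrec f) (hg : Primrec g)
    (hh : Primrec h) : Primrec (fun a => sel (f a) (g a) (h a)) :=
  Primrec.ite (Primrec.eq.comp hf (Primrec.const 0)) hg hh

end prims

theorem un1_lt (m c d : ℕ) : (m / c).unpair.1 < m + d + 1 :=
  lt_of_le_of_lt ((Nat.unpair_left_le _).trans (Nat.div_le_self _ _)) (by omega)

theorem un2_lt (m c d : ℕ) : (m / c).unpair.2 < m + d + 1 :=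
  lt_of_le_of_lt ((Nat.unpair_right_le _).trans (Nat.div_le_self _ _)) (by omega)

def tz {n : ℕ} : LA.Term (Empty ⊕ Fin n) := Constants.term (L := LA) ArithFunc.zero
def tone {n : ℕ} : LA.Term (Empty ⊕ Fin n) := Constants.term (L := LA) ArithFunc.one
def ta {n : ℕ} (t s : LA.Term (Empty ⊕ Fin n)) : LA.Term (Empty ⊕ Fin n) :=
  Functions.apply₂ (L := LA) ArithFunc.add t s
def tm {n : ℕ} (t s : LA.Term (Empty ⊕ Fin n)) : LA.Term (Empty ⊕ Fin n) :=
  Functions.apply₂ (L := LA) ArithFunc.mul t s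

def decT (n : ℕ) : ℕ → LA.Term (Empty ⊕ Fin n)
  | 0 => tz
  | 1 => tone
  | m + 2 =>
    have := un1_lt m 3 1
    have := un2_lt m 3 1
    if m % 3 = 0 then (if h : m / 3 < n then Term.var (Sum.inr ⟨m / 3, h⟩) else tz)
    else if m % 3 = 1 then ta (decT n (m / 3).unpair.1) (decT n (m / 3).unpair.2)
    else tm (decT n (m / 3).unpair.1) (decT n (m / 3).unpair.2)

def fa (n : ℕ) (t s : LA.Term (Empty ⊕ Fin n)) : LA.BoundedFormula Empty n :=
  BoundedFormula.rel (L := LA) ArithRel.lt ![t, s]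

def decF : ℕ → (n : ℕ) → LA.BoundedFormula Empty n
  | 0, _ => BoundedFormula.falsum
  | m + 1, n =>
    have := un1_lt m 4 0
    have := un2_lt m 4 0
    have : m / 4 < m + 1 := lt_of_le_of_lt (Nat.div_le_self _ _) (by omega)
    if m % 4 = 0 then BoundedFormula.equal (decT n (m / 4).unpair.1) (decT n (m / 4).unpair.2)
    else if m % 4 = 1 then fa n (decT n (m / 4).unpair.1) (decT n (m / 4).unpair.2)
    else if m % 4 = 2 then (decF (m / 4).unpair.1 n).imp (decF (m / 4).unpair.2 n)
    else (decF (m / 4) (n + 1)).all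

theorem decT_surj {n : ℕ} (t : LA.Term (Empty ⊕ Fin n)) : ∃ k, decT n k = t := by
  induction t with
  | var i =>
    rcases i with i | i
    · exact i.elim
    · refine ⟨3 * i + 2, ?_⟩
      rw [decT]
      have h1 : (3 * (i : ℕ)) / 3 = i := by omega
      simp [h1]
  | func f ts ih =>
    choose k hk using ih
    cases f with
    | zero => exact ⟨0, by rw [decT]; exact congrArg (Term.func (L := LA) ArithFunc.zero) (Subsingleton.elim _ _)⟩
    | one => exact ⟨1, by rw [decT]; exact congrArg (Term.func (L := LA) ArithFunc.one) (Subsingleton.elim _ _)⟩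
    | add =>
      refine ⟨3 * Nat.pair (k 0) (k 1) + 1 + 2, ?_⟩
      rw [decT]
      have h1 : (3 * Nat.pair (k 0) (k 1) + 1) / 3 = Nat.pair (k 0) (k 1) := by omega
      have h2 : (3 * Nat.pair (k 0) (k 1) + 1) % 3 = 1 := by omega
      simp only [h1, h2, Nat.unpair_pair, hk, ta, Functions.apply₂]
      rw [if_neg (by omega), if_pos (by trivial)]
      congr 1
      funext i
      fin_cases i <;> rfl
    | mul =>
      refine ⟨3 * Nat.pair (k 0) (k 1) + 2 + 2, ?_⟩
      rw [decT]
      have h1 : (3 * Nat.pair (k 0) (k 1) + 2) / 3 = Nat.pair (k 0) (k 1) := by omega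
      have h2 : (3 * Nat.pair (k 0) (k 1) + 2) % 3 = 2 := by omega
      simp only [h1, h2, Nat.unpair_pair, hk, tm, Functions.apply₂]
      rw [if_neg (by omega), if_neg (by omega)]
      congr 1
      funext i
      fin_cases i <;> rfl

theorem decF_surj {n : ℕ} (φ : LA.BoundedFormula Empty n) : ∃ k, decF k n = φ := by
  induction φ with
  | falsum => exact ⟨0, by rw [decF]⟩
  | @equal n t s =>
    obtain ⟨a, rfl⟩ := decT_surj t
    obtain ⟨b, rfl⟩ := decT_surj s
    refine ⟨4 * Nat.pair a b + 1, ?_⟩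
    have h1 : (4 * Nat.pair a b) / 4 = Nat.pair a b := by omega
    have h2 : (4 * Nat.pair a b) % 4 = 0 := by omega
    rw [decF]
    simp only [h1, h2, Nat.unpair_pair]
    simp
  | @rel n l R ts =>
    cases R
    obtain ⟨a, ha⟩ := decT_surj (ts 0)
    obtain ⟨b, hb⟩ := decT_surj (ts 1)
    refine ⟨4 * Nat.pair a b + 1 + 1, ?_⟩
    have h1 : (4 * Nat.pair a b + 1) / 4 = Nat.pair a b := by omega
    have h2 : (4 * Nat.pair a b + 1) % 4 = 1 := by omega
    rw [decF]
    simp only [h1, h2, Nat.unpair_pair, ha, hb, fa]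
    rw [if_neg (by omega), if_pos (by trivial)]
    congr 1
    funext i
    fin_cases i <;> rfl
  | imp φ ψ h1 h2 =>
    obtain ⟨a, rfl⟩ := h1
    obtain ⟨b, rfl⟩ := h2
    refine ⟨4 * Nat.pair a b + 2 + 1, ?_⟩
    have h1 : (4 * Nat.pair a b + 2) / 4 = Nat.pair a b := by omega
    have h2 : (4 * Nat.pair a b + 2) % 4 = 2 := by omega
    rw [decF]
    simp only [h1, h2, Nat.unpair_pair]
    simp
  | all φ h1 =>
    obtain ⟨a, rfl⟩ := h1
    refine ⟨4 * a + 3 + 1, ?_⟩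
    have h1 : (4 * a + 3) / 4 = a := by omega
    have h2 : (4 * a + 3) % 4 = 3 := by omega
    rw [decF]
    simp only [h1, h2]
    simp

/-- codes of the list encoding of terms -/
def GT (n t : ℕ) : List ℕ := (decT n t).listEncode.map Encodable.encode

def GF (n x : ℕ) : List ℕ := (decF x n).listEncode.map Encodable.encode

theorem encode_map {α : Type} [Encodable α] (l : List α) :
    Encodable.encode (l.map Encodable.encode) = Encodable.encode l := by
  induction l with
  | nil => rfl
  | cons a l ih => rw [List.map_cons, Encodable.encode_list_cons, ih,
      Encodable.encode_list_cons]; rfl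

theorem encode_decT (n t : ℕ) : Encodable.encode (decT n t) = Encodable.encode (GT n t) := by
  rw [GT, encode_map]; rfl

theorem godelCode_decF (x : ℕ) : godelCode (decF x 0) = Encodable.encode (GF 0 x) := by
  rw [GF, encode_map]; rfl

theorem GT_zero (n : ℕ) : GT n 0 = [1] := by
  rw [GT, decT]; rfl

theorem GT_one (n : ℕ) : GT n 1 = [3] := by
  rw [GT, decT]; rfl

theorem GT_step (n m : ℕ) : GT n (m + 2) =
    sel (m % 3) (sel (m / 3 + 1 - n) [4 * (m / 3) + 2] [1])
     (sel (m % 3 - 1) (5 :: (GT n (m / 3).unpair.1 ++ GT n (m / 3).unpair.2))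
      (7 :: (GT n (m / 3).unpair.1 ++ GT n (m / 3).unpair.2))) := by
  rw [GT, decT]
  simp only [sel]
  have e1 : (m / 3 + 1 - n = 0) ↔ m / 3 < n := by omega
  split_ifs with h1 h2 h3 h4 h5 h6 <;> try omega
  · show [2 * (2 * (m / 3) + 1)] = _
    congr 1
    ring
  · rfl
  · simp only [ta, Functions.apply₂, Term.listEncode, List.map_cons, List.map_append,
      List.finRange_succ, List.finRange_zero]
    simp [GT]
    rfl
  · simp only [tm, Functions.apply₂, Term.listEncode, List.map_cons, List.map_append,
      List.finRange_succ, List.finRange_zero]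
    simp [GT]
    rfl

theorem GF_zero (n : ℕ) : GF n 0 = [4 * n + 11] := by
  rw [GF, decF]
  show [2 * (2 * (n + 2) + 1) + 1] = _
  congr 1
  ring

theorem GF_step (n m : ℕ) : GF n (m + 1) =
    sel (m % 4) [2 * Nat.pair n (Encodable.encode (GT n (m / 4).unpair.1)),
      2 * Nat.pair n (Encodable.encode (GT n (m / 4).unpair.2))]
     (sel (m % 4 - 1) [1, 4 * n + 3, 2 * Nat.pair n (Encodable.encode (GT n (m / 4).unpair.1)),
      2 * Nat.pair n (Encodable.encode (GT n (m / 4).unpair.2))]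
      (sel (m % 4 - 2) (3 :: (GF n (m / 4).unpair.1 ++ GF n (m / 4).unpair.2))
        (7 :: GF (n + 1) (m / 4)))) := by
  rw [GF, decF]
  simp only [sel]
  split_ifs with h1 h2 h3 h4 h5 h6 <;> try omega
  · rw [← encode_decT, ← encode_decT]
    rfl
  · rw [← encode_decT, ← encode_decT]
    have : 4 * n + 3 = 2 * (2 * n + 1) + 1 := by ring
    rw [this]
    rfl
  · simp only [BoundedFormula.listEncode, List.map_cons, List.map_append]
    rfl
  · simp only [BoundedFormula.listEncode, List.map_cons]
    rfl

theorem primrec_GT : Primrec₂ GT := by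
  refine Primrec.nat_omega_rec GT (m := fun _ t => t)
    (l := fun _ t => sel (t - 1) [] [((t - 2) / 3).unpair.1, ((t - 2) / 3).unpair.2])
    (g := fun n p => some (sel p.1 [1] (sel (p.1 - 1) [3]
      (sel ((p.1 - 2) % 3) (sel ((p.1 - 2) / 3 + 1 - n) [4 * ((p.1 - 2) / 3) + 2] [1])
       (sel ((p.1 - 2) % 3 - 1) (5 :: (p.2.getD 0 [] ++ p.2.getD 1 []))
        (7 :: (p.2.getD 0 [] ++ p.2.getD 1 [])))))))
    Primrec₂.right ?_ ?_ ?_ ?_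
  · unfold Primrec₂; fun_prop
  · unfold Primrec₂; fun_prop
  · intro n t t' h
    rcases t with _ | _ | m
    · simp [sel] at h
    · simp [sel] at h
    · have h1 := un1_lt m 3 1
      have h2 := un2_lt m 3 1
      simp [sel] at h
      rcases h with rfl | rfl <;> assumption
  · intro n t
    rcases t with _ | _ | m
    · simp [sel, GT_zero]
    · simp [sel, GT_one]
    · rw [GT_step]
      simp [sel]

attribute [fun_prop] Primrec₂
@[fun_prop] theorem pr_GT {α : Type} [Primcodable α] {f g : α → ℕ} (hf : Primrec f)
    (hg : Primrec g) : Primrec (fun a => GT (f a) (g a)) := primrec_GT.comp hf hg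

theorem primrec_GF : Primrec (fun p : ℕ × ℕ => GF p.1 p.2) := by
  refine Primrec.nat_omega_rec' (fun p : ℕ × ℕ => GF p.1 p.2) (m := fun p => p.2)
    (l := fun p => sel p.2 [] [(p.1, ((p.2 - 1) / 4).unpair.1), (p.1, ((p.2 - 1) / 4).unpair.2),
      (p.1 + 1, (p.2 - 1) / 4)])
    (g := fun p L => some (sel p.2 [4 * p.1 + 11]
    (sel ((p.2 - 1) % 4)
      [2 * Nat.pair p.1 (Encodable.encode (GT p.1 ((p.2 - 1) / 4).unpair.1)),
      2 * Nat.pair p.1 (Encodable.encode (GT p.1 ((p.2 - 1) / 4).unpair.2))]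
     (sel ((p.2 - 1) % 4 - 1)
      [1, 4 * p.1 + 3, 2 * Nat.pair p.1 (Encodable.encode (GT p.1 ((p.2 - 1) / 4).unpair.1)),
      2 * Nat.pair p.1 (Encodable.encode (GT p.1 ((p.2 - 1) / 4).unpair.2))]
      (sel ((p.2 - 1) % 4 - 2) (3 :: (L.getD 0 [] ++ L.getD 1 []))
        (7 :: L.getD 2 []))))))
    Primrec.snd ?_ ?_ ?_ ?_
  · fun_prop
  · unfold Primrec₂; fun_prop
  · rintro ⟨n, x⟩ t' h
    rcases x with _ | m
    · simp [sel] at h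
    · have h1 := un1_lt m 4 0
      have h2 := un2_lt m 4 0
      have h3 : m / 4 < m + 1 := lt_of_le_of_lt (Nat.div_le_self _ _) (by omega)
      simp [sel] at h
      rcases h with rfl | rfl | rfl <;> assumption
  · rintro ⟨n, x⟩
    rcases x with _ | m
    · simp [sel, GF_zero]
    · simp only [GF_step]
      simp [sel]


def look (ρ : List ℕ) (i : ℕ) : ℕ := ρ.reverse.getD i 0

def fad (a b : ℕ) : ℕ := 3 * Nat.pair a b + 2
def fmu (a b : ℕ) : ℕ := 3 * Nat.pair a b + 3
def wit (x : ℕ) (ρ : List ℕ) : ℕ := 3 * Nat.pair x (Encodable.encode ρ) + 4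

/-- value of a raw term in the Herbrand domain -/
def tv (ρ : List ℕ) : ℕ → ℕ
  | 0 => 0
  | 1 => 1
  | m + 2 =>
    have := un1_lt m 3 1
    have := un2_lt m 3 1
    if m % 3 = 0 then look ρ (m / 3)
    else if m % 3 = 1 then fad (tv ρ (m / 3).unpair.1) (tv ρ (m / 3).unpair.2)
    else fmu (tv ρ (m / 3).unpair.1) (tv ρ (m / 3).unpair.2)

theorem primrec_tv : Primrec₂ tv := by
  refine Primrec.nat_omega_rec tv (m := fun _ t => t)
    (l := fun _ t => sel (t - 1) [] [((t - 2) / 3).unpair.1, ((t - 2) / 3).unpair.2])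
    (g := fun ρ p => some (sel p.1 0 (sel (p.1 - 1) 1
      (sel ((p.1 - 2) % 3) (ρ.reverse.getD ((p.1 - 2) / 3) 0)
       (sel ((p.1 - 2) % 3 - 1) (3 * Nat.pair (p.2.getD 0 0) (p.2.getD 1 0) + 2)
        (3 * Nat.pair (p.2.getD 0 0) (p.2.getD 1 0) + 3))))))
    Primrec₂.right ?_ ?_ ?_ ?_
  · unfold Primrec₂; fun_prop
  · unfold Primrec₂; fun_prop
  · intro n t t' h
    rcases t with _ | _ | m
    · simp [sel] at h
    · simp [sel] at h
    · have h1 := un1_lt m 3 1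
      have h2 := un2_lt m 3 1
      simp [sel] at h
      rcases h with rfl | rfl <;> assumption
  · intro n t
    rcases t with _ | _ | m
    · simp [sel, tv]
    · simp [sel, tv]
    · rw [tv]
      simp only [sel, look, fad, fmu]
      have : m % 3 = 0 ∨ m % 3 = 1 ∨ m % 3 = 2 := by omega
      rcases this with h | h | h <;> simp [h]

@[fun_prop] theorem pr_tv {α : Type} [Primcodable α] {f : α → List ℕ} {g : α → ℕ} (hf : Primrec f)
    (hg : Primrec g) : Primrec (fun a => tv (f a) (g a)) := primrec_tv.comp hf hg

def aF (x : ℕ) (ρ : List ℕ) : ℕ := 3 * Nat.pair x (Encodable.encode ρ)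
def aE (c d : ℕ) : ℕ := 3 * Nat.pair c d + 1
def aL (c d : ℕ) : ℕ := 3 * Nat.pair c d + 2

abbrev Cls := List (List (ℕ × Bool))

/-- clauses expressing that a valuation is a Henkin valuation -/
def cl1 (a b : ℕ) (ρ : List ℕ) : Cls :=
  [ [(aF 0 ρ, false)],
    [(aF (4 * Nat.pair a b + 1) ρ, false), (aE (tv ρ a) (tv ρ b), true)],
    [(aF (4 * Nat.pair a b + 1) ρ, true), (aE (tv ρ a) (tv ρ b), false)],
    [(aF (4 * Nat.pair a b + 2) ρ, false), (aL (tv ρ a) (tv ρ b), true)],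
    [(aF (4 * Nat.pair a b + 2) ρ, true), (aL (tv ρ a) (tv ρ b), false)],
    [(aF (4 * Nat.pair a b + 3) ρ, false), (aF a ρ, false), (aF b ρ, true)],
    [(aF (4 * Nat.pair a b + 3) ρ, true), (aF a ρ, true)],
    [(aF (4 * Nat.pair a b + 3) ρ, true), (aF b ρ, false)],
    [(aF (4 * a + 4) ρ, false), (aF a (b :: ρ), true)],
    [(aF (4 * a + 4) ρ, true), (aF a (wit a ρ :: ρ), false)] ]

def cl2 (a b c d : ℕ) : Cls :=
  [ [(aE a a, true)],
    [(aE a b, false), (aE b a, true)],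
    [(aE a b, false), (aE b c, false), (aE a c, true)],
    [(aE a b, false), (aE c d, false), (aE (fad a c) (fad b d), true)],
    [(aE a b, false), (aE c d, false), (aE (fmu a c) (fmu b d), true)],
    [(aE a b, false), (aE c d, false), (aL a c, false), (aL b d, true)] ]

section
variable {α : Type} [Primcodable α]
@[fun_prop] theorem pr_aF {f : α → ℕ} {g : α → List ℕ} (hf : Primrec f)
    (hg : Primrec g) : Primrec (fun a => aF (f a) (g a)) := by unfold aF; fun_prop
@[fun_prop] theorem pr_aE {f : α → ℕ} {g : α → ℕ} (hf : Primrec f)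
    (hg : Primrec g) : Primrec (fun a => aE (f a) (g a)) := by unfold aE; fun_prop
@[fun_prop] theorem pr_aL {f : α → ℕ} {g : α → ℕ} (hf : Primrec f)
    (hg : Primrec g) : Primrec (fun a => aL (f a) (g a)) := by unfold aL; fun_prop
@[fun_prop] theorem pr_fad {f : α → ℕ} {g : α → ℕ} (hf : Primrec f)
    (hg : Primrec g) : Primrec (fun a => fad (f a) (g a)) := by unfold fad; fun_prop
@[fun_prop] theorem pr_fmu {f : α → ℕ} {g : α → ℕ} (hf : Primrec f)
    (hg : Primrec g) : Primrec (fun a => fmu (f a) (g a)) := by unfold fmu; fun_prop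
@[fun_prop] theorem pr_wit {f : α → ℕ} {g : α → List ℕ} (hf : Primrec f)
    (hg : Primrec g) : Primrec (fun a => wit (f a) (g a)) := by unfold wit; fun_prop
@[fun_prop] theorem pr_cl1 {f g : α → ℕ} {h : α → List ℕ} (hf : Primrec f)
    (hg : Primrec g) (hh : Primrec h) : Primrec (fun a => cl1 (f a) (g a) (h a)) := by
  unfold cl1; fun_prop
@[fun_prop] theorem pr_cl2 {f g h k : α → ℕ} (hf : Primrec f)
    (hg : Primrec g) (hh : Primrec h) (hk : Primrec k) :
    Primrec (fun a => cl2 (f a) (g a) (h a) (k a)) := by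
  unfold cl2; fun_prop
@[fun_prop] theorem pr_GF {f g : α → ℕ} (hf : Primrec f)
    (hg : Primrec g) : Primrec (fun a => GF (f a) (g a)) := primrec_GF.comp (hf.pair hg)
end

abbrev Par := ℕ × ℕ × ℕ × ℕ × List ℕ

/-- the full clause enumeration, with `tk k n` the staged enumeration of the theory -/
def cls (tk : ℕ → ℕ → ℕ) (b : Bool) (x₀ k : ℕ) : Cls :=
  [(aF x₀ [], b)] :: (cl1 (Denumerable.ofNat Par k).1 (Denumerable.ofNat Par k).2.1
      (Denumerable.ofNat Par k).2.2.2.2 ++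
    (cl2 (Denumerable.ofNat Par k).1 (Denumerable.ofNat Par k).2.1
      (Denumerable.ofNat Par k).2.2.1 (Denumerable.ofNat Par k).2.2.2.1 ++
    sel (tk (Denumerable.ofNat Par k).1
      (Encodable.encode (GF 0 (Denumerable.ofNat Par k).2.1))) ([] : Cls)
      [ [(aF (Denumerable.ofNat Par k).2.1 [], true)] ]))

@[fun_prop] theorem pr_ofNat {α : Type} [Primcodable α] {f : α → ℕ} (hf : Primrec f) :
    Primrec (fun a => Denumerable.ofNat Par (f a)) := (Primrec.ofNat Par).comp hf

theorem primrec_cls {tk : ℕ → ℕ → ℕ} (htk : Primrec₂ tk) (b : Bool) : Primrec₂ (cls tk b) := by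
  have : ∀ {α : Type} [Primcodable α] {f g : α → ℕ}, Primrec f → Primrec g →
    Primrec (fun a => tk (f a) (g a)) := fun hf hg => htk.comp hf hg
  have h1 : Primrec (fun q : ℕ × ℕ => tk (Denumerable.ofNat Par q.2).1
      (Encodable.encode (GF 0 (Denumerable.ofNat Par q.2).2.1))) := this (by fun_prop) (by fun_prop)
  unfold Primrec₂ cls
  apply pr_cons
  · fun_prop
  apply pr_append
  · fun_prop
  apply pr_append
  · fun_prop
  apply pr_sel h1
  · fun_prop
  · fun_prop

def Sat (W : ℕ → Bool) (C : List (ℕ × Bool)) : Prop := ∃ l ∈ C, W l.1 = l.2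

theorem compactness (S : ℕ → Cls) (h : ∀ K, ∃ W, ∀ k < K, ∀ C ∈ S k, Sat W C) :
    ∃ W, ∀ k, ∀ C ∈ S k, Sat W C := by
  let t : ℕ → Set (ℕ → Bool) := fun K => {W | ∀ k < K, ∀ C ∈ S k, Sat W C}
  have hc : ∀ K, IsClosed (t K) := by
    intro K
    have : t K = ⋂ k, ⋂ (_ : k < K), ⋂ C, ⋂ (_ : C ∈ S k), {W | Sat W C} := by
      ext W; simp [t]
    rw [this]
    refine isClosed_iInter fun k => isClosed_iInter fun _ => isClosed_iInter fun C =>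
      isClosed_iInter fun _ => ?_
    have : {W : ℕ → Bool | Sat W C} = ⋃ l ∈ {l | l ∈ C}, {W | W l.1 = l.2} := by
      ext W; simp [Sat]
    rw [this]
    refine Set.Finite.isClosed_biUnion (List.finite_toSet C) fun l _ => ?_
    exact isClosed_eq (continuous_apply _) continuous_const
  have := IsCompact.nonempty_iInter_of_sequence_nonempty_isCompact_isClosed t
    (fun K W hW k hk => hW k (by omega)) h (hc 0).isCompact hc
  obtain ⟨W, hW⟩ := this
  rw [Set.mem_iInter] at hW
  exact ⟨W, fun k => hW (k + 1) k (by omega)⟩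

/-- refutation at stage `N` -/
def Refut (S : ℕ → Cls) (N : ℕ) : Prop :=
  ∀ s < 2 ^ N, ∃ k < N, ∃ C ∈ S k, ∀ l ∈ C, l.1 < N ∧ s.testBit l.1 ≠ l.2

theorem refut_iff (S : ℕ → Cls) : (∃ N, Refut S N) ↔ ¬ ∃ W, ∀ k, ∀ C ∈ S k, Sat W C := by
  constructor
  · rintro ⟨N, hN⟩ ⟨W, hW⟩
    obtain ⟨k, -, C, hC, h⟩ := hN (Nat.ofBits (fun i : Fin N => W i)) (Nat.ofBits_lt_two_pow _)
    obtain ⟨l, hl, e⟩ := hW k C hC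
    obtain ⟨h1, h2⟩ := h l hl
    rw [Nat.testBit_ofBits_lt _ _ h1] at h2
    exact h2 e
  · intro h
    have h' := mt (compactness S) h
    push Not at h'
    obtain ⟨K, hK⟩ := h'
    have hb : ∃ N, K ≤ N ∧ ∀ k < K, ∀ C ∈ S k, ∀ l ∈ C, l.1 < N := by
      clear hK
      induction K with
      | zero => exact ⟨0, le_rfl, by simp⟩
      | succ K ih =>
        obtain ⟨N, h1, h2⟩ := ih
        have : ∃ B, ∀ C ∈ S K, ∀ l ∈ C, l.1 < B := by
          refine ⟨((S K).flatten.map Prod.fst).sum + 1, fun C hC l hl => ?_⟩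
          have : l.1 ∈ (S K).flatten.map Prod.fst :=
            List.mem_map_of_mem (List.mem_flatten.2 ⟨C, hC, hl⟩)
          exact Nat.lt_succ_of_le (List.single_le_sum (by simp) _ this)
        obtain ⟨B, hB⟩ := this
        refine ⟨N + B + 1, by omega, fun k hk C hC l hl => ?_⟩
        by_cases hkK : k = K
        · subst hkK
          have := hB C hC l hl
          omega
        · have := h2 k (by omega) C hC l hl
          omega
    obtain ⟨N, h1, h2⟩ := hb
    refine ⟨N, fun s _ => ?_⟩
    obtain ⟨k, hk, C, hC, hs⟩ := hK s.testBit
    refine ⟨k, by omega, C, hC, fun l hl => ⟨h2 k hk C hC l hl, fun e => hs ⟨l, hl, e⟩⟩⟩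

theorem primrec_pow : Primrec₂ (fun a b : ℕ => a ^ b) := Primrec₂.unpaired'.1 Nat.Primrec.pow

@[fun_prop] theorem pr_pow {α : Type} [Primcodable α] {f g : α → ℕ} (hf : Primrec f)
    (hg : Primrec g) : Primrec (fun a => f a ^ g a) := primrec_pow.comp hf hg

theorem primrec_refut {S : ℕ → ℕ → Cls} (hS : Primrec₂ S) :
    PrimrecPred (fun p : ℕ × ℕ => Refut (S p.1) p.2) := by
  have l1 : PrimrecRel (fun (l : ℕ × Bool) (y : ℕ × ℕ) =>
      l.1 < y.2 ∧ (y.1 / 2 ^ l.1) % 2 ≠ Encodable.encode l.2) :=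
    PrimrecPred.and (Primrec.nat_lt.comp (by fun_prop) (by fun_prop))
      (PrimrecPred.not (Primrec.eq.comp (by fun_prop) (by fun_prop)))
  have l2 := l1.forall_mem_list.exists_mem_list
  have l3 : PrimrecRel (fun (k : ℕ) (y : ℕ × ℕ × ℕ) => ∃ C ∈ S y.2.1 k,
      ∀ l ∈ C, l.1 < y.2.2 ∧ (y.1 / 2 ^ l.1) % 2 ≠ Encodable.encode l.2) :=
    l2.comp (f := fun q : ℕ × ℕ × ℕ × ℕ => S q.2.2.1 q.1) (g := fun q => (q.2.1, q.2.2.2))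
      (hS.comp (by fun_prop) (by fun_prop)) (by fun_prop)
  have l4 := l3.exists_mem_list
  have l5 : PrimrecRel (fun (s : ℕ) (y : ℕ × ℕ) => ∃ k < y.2, ∃ C ∈ S y.1 k,
      ∀ l ∈ C, l.1 < y.2 ∧ (s / 2 ^ l.1) % 2 ≠ Encodable.encode l.2) :=
    (l4.comp (f := fun q : ℕ × ℕ × ℕ => List.range q.2.2) (g := fun q => (q.1, q.2.1, q.2.2))
      (Primrec.list_range.comp (by fun_prop)) (by fun_prop)).of_eq (by simp)
  have l6 := l5.forall_mem_list
  have l7 := l6.comp (f := fun q : ℕ × ℕ => List.range (2 ^ q.2)) (g := fun q => q)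
      (Primrec.list_range.comp (by fun_prop)) (by fun_prop)
  refine l7.of_eq (fun p => ?_)
  unfold Refut
  have : ∀ (s : ℕ) (l : ℕ × Bool), s.testBit l.1 ≠ l.2 ↔ (s / 2 ^ l.1) % 2 ≠ Encodable.encode l.2 := by
    rintro s ⟨i, b⟩
    rw [Nat.testBit_eq_decide_div_mod_eq]
    have : (s / 2 ^ i) % 2 = 0 ∨ (s / 2 ^ i) % 2 = 1 := by omega
    cases b <;> rcases this with h | h <;> simp [h]
  simp only [this, List.mem_range]

theorem re_of_ex {R : ℕ → ℕ → Prop} (hR : PrimrecRel R) : REPred (fun n => ∃ k, R n k) := by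
  classical
  have hR := hR.decide
  have h1 : Computable₂ (fun n k => decide (R n k)) := hR.to_comp
  have h2 : Partrec (fun n => Nat.rfind (fun k => (Part.some (decide (R n k)) : Part Bool))) :=
    Partrec.rfind h1.partrec₂
  refine h2.dom_re.of_eq (fun n => ?_)
  refine Nat.rfind_dom.trans ⟨?_, ?_⟩
  · rintro ⟨k, h, -⟩
    exact ⟨k, of_decide_eq_true (Part.mem_some_iff.1 h).symm⟩
  · rintro ⟨k, h⟩
    exact ⟨k, Part.mem_some_iff.2 (decide_eq_true h).symm, fun _ => trivial⟩

/-- codes of sentences refuted with sign `b` -/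
theorem re_codes {tk : ℕ → ℕ → ℕ} (htk : Primrec₂ tk) (b : Bool) :
    REPred (fun n => ∃ x N, n = Encodable.encode (GF 0 x) ∧ Refut (cls tk b x) N) := by
  have h := primrec_refut (primrec_cls htk b)
  have h2 : PrimrecRel (fun n k : ℕ => n = Encodable.encode (GF 0 k.unpair.1) ∧
      Refut (cls tk b k.unpair.1) k.unpair.2) :=
    PrimrecPred.and (Primrec.eq.comp (by fun_prop) (by fun_prop))
      (h.comp (f := fun q : ℕ × ℕ => (q.2.unpair.1, q.2.unpair.2)) (by fun_prop))
  refine (re_of_ex h2).of_eq (fun n => ?_)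
  constructor
  · rintro ⟨k, h⟩; exact ⟨_, _, h⟩
  · rintro ⟨x, N, h⟩
    exact ⟨Nat.pair x N, by simpa using h⟩

theorem exists_tk (f : ℕ →. Unit) (hf : Partrec f) :
    ∃ tk : ℕ → ℕ → ℕ, Primrec₂ tk ∧ ∀ n, (f n).Dom ↔ ∃ k, tk k n ≠ 0 := by
  have hg : Nat.Partrec (fun n => (f n).map (fun _ => 0)) := by
    refine Partrec.nat_iff.1 ?_
    exact hf.map (Computable.const 0).to₂
  obtain ⟨c, hc⟩ := Nat.Partrec.Code.exists_code.1 hg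
  refine ⟨fun k n => Encodable.encode (Nat.Partrec.Code.evaln k c n), ?_, fun n => ?_⟩
  · exact Primrec.encode.comp (Nat.Partrec.Code.primrec_evaln.comp
      (f := fun a : (ℕ × Nat.Partrec.Code) × ℕ => _) (g := fun q : ℕ × ℕ => ((q.1, c), q.2))
      (by fun_prop))
  · have h1 : (f n).Dom ↔ ∃ x, x ∈ Nat.Partrec.Code.eval c n := by
      rw [hc, ← Part.dom_iff_mem]; rfl
    rw [h1]
    simp only [Nat.Partrec.Code.evaln_complete]
    rw [exists_comm]
    refine exists_congr fun k => ?_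
    cases h : Nat.Partrec.Code.evaln k c n <;> simp


structure Hk (V : ℕ → List ℕ → Prop) (E L : ℕ → ℕ → Prop) : Prop where
  bot : ∀ ρ, ¬ V 0 ρ
  eq : ∀ a b ρ, V (4 * Nat.pair a b + 1) ρ ↔ E (tv ρ a) (tv ρ b)
  lt : ∀ a b ρ, V (4 * Nat.pair a b + 2) ρ ↔ L (tv ρ a) (tv ρ b)
  imp : ∀ a b ρ, V (4 * Nat.pair a b + 3) ρ ↔ (V a ρ → V b ρ)
  all1 : ∀ a c ρ, V (4 * a + 4) ρ → V a (c :: ρ)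
  all2 : ∀ a ρ, V a (wit a ρ :: ρ) → V (4 * a + 4) ρ
  refl : ∀ a, E a a
  symm : ∀ a b, E a b → E b a
  trans : ∀ a b c, E a b → E b c → E a c
  add : ∀ a b c d, E a b → E c d → E (fad a c) (fad b d)
  mul : ∀ a b c d, E a b → E c d → E (fmu a c) (fmu b d)
  ltc : ∀ a b c d, E a b → E c d → L a c → L b d

theorem sat_cls_iff (tk : ℕ → ℕ → ℕ) (b : Bool) (x₀ : ℕ) (W : ℕ → Bool) :
    (∀ k, ∀ C ∈ cls tk b x₀ k, Sat W C) ↔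
      (Hk (fun x ρ => W (aF x ρ) = true) (fun c d => W (aE c d) = true)
        (fun c d => W (aL c d) = true) ∧ W (aF x₀ []) = b ∧
        ∀ x k, tk k (Encodable.encode (GF 0 x)) ≠ 0 → W (aF x []) = true) := by
  have key : (∀ k, ∀ C ∈ cls tk b x₀ k, Sat W C) ↔ ∀ a a' c d ρ,
      ∀ C ∈ cls tk b x₀ (Encodable.encode ((a, a', c, d, ρ) : Par)), Sat W C := by
    constructor
    · intro h a a' c d ρ
      exact h _
    · intro h k
      have := h (Denumerable.ofNat Par k).1 (Denumerable.ofNat Par k).2.1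
        (Denumerable.ofNat Par k).2.2.1 (Denumerable.ofNat Par k).2.2.2.1
        (Denumerable.ofNat Par k).2.2.2.2
      simpa using this
  rw [key]
  simp only [cls, Denumerable.ofNat_encode, List.forall_mem_cons, List.forall_mem_append]
  have hs : ∀ n (D : Cls), (∀ C ∈ sel n ([] : Cls) D, Sat W C) ↔ (n ≠ 0 → ∀ C ∈ D, Sat W C) := by
    intro n D
    unfold sel
    split_ifs with h <;> simp [h]
  simp only [hs, cl1, cl2, List.forall_mem_cons]
  have hb : ∀ i, W i = false ↔ ¬ W i = true := by intro i; simp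
  simp only [Sat, List.exists_mem_cons_iff, List.not_mem_nil, false_and, exists_false, or_false,
    hb, IsEmpty.forall_iff, implies_true, and_true]
  constructor
  · intro h
    refine ⟨?_, (h 0 0 0 0 []).1, fun x k hk => (h k x 0 0 []).2.2.2 hk⟩
    constructor
    · intro ρ
      obtain ⟨c1, -, -, -, -, -, -, -, -, -⟩ := (h 0 0 0 0 ρ).2.1
      clear h; tauto
    · intro a b ρ
      obtain ⟨-, c2, c3, -, -, -, -, -, -, -⟩ := (h a b 0 0 ρ).2.1
      clear h; tauto
    · intro a b ρ
      obtain ⟨-, -, -, c4, c5, -, -, -, -, -⟩ := (h a b 0 0 ρ).2.1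
      clear h; tauto
    · intro a b ρ
      obtain ⟨-, -, -, -, -, c6, c7, c8, -, -⟩ := (h a b 0 0 ρ).2.1
      clear h; tauto
    · intro a b ρ
      obtain ⟨-, -, -, -, -, -, -, -, c9, -⟩ := (h a b 0 0 ρ).2.1
      clear h; tauto
    · intro a ρ
      obtain ⟨-, -, -, -, -, -, -, -, -, c10⟩ := (h a 0 0 0 ρ).2.1
      clear h; tauto
    · intro a
      obtain ⟨c1, -, -, -, -, -⟩ := (h a 0 0 0 []).2.2.1
      clear h; tauto
    · intro a b
      obtain ⟨-, c2, -, -, -, -⟩ := (h a b 0 0 []).2.2.1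
      clear h; tauto
    · intro a b c
      obtain ⟨-, -, c3, -, -, -⟩ := (h a b c 0 []).2.2.1
      clear h; tauto
    · intro a b c d
      obtain ⟨-, -, -, c4, -, -⟩ := (h a b c d []).2.2.1
      clear h; tauto
    · intro a b c d
      obtain ⟨-, -, -, -, c5, -⟩ := (h a b c d []).2.2.1
      clear h; tauto
    · intro a b c d
      obtain ⟨-, -, -, -, -, c6⟩ := (h a b c d []).2.2.1
      clear h; tauto
  · rintro ⟨H, h1, h2⟩ a a' c d ρ
    refine ⟨h1, ?_, ?_, fun hk => h2 _ _ hk⟩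
    · clear h1 h2
      refine ⟨?_, ?_, ?_, ?_, ?_, ?_, ?_, ?_, ?_, ?_⟩
      · exact H.bot ρ
      · have := H.eq a a' ρ; clear H; tauto
      · have := H.eq a a' ρ; clear H; tauto
      · have := H.lt a a' ρ; clear H; tauto
      · have := H.lt a a' ρ; clear H; tauto
      · have := H.imp a a' ρ; clear H; tauto
      · have := H.imp a a' ρ; clear H; tauto
      · have := H.imp a a' ρ; clear H; tauto
      · have := H.all1 a a' ρ; clear H; tauto
      · have := H.all2 a ρ; clear H; tauto
    · clear h1 h2
      refine ⟨?_, ?_, ?_, ?_, ?_, ?_⟩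
      · exact H.refl a
      · have := H.symm a a'; clear H; tauto
      · have := H.trans a a' c; clear H; tauto
      · have := H.add a a' c d; clear H; tauto
      · have := H.mul a a' c d; clear H; tauto
      · have := H.ltc a a' c d; clear H; tauto

open Classical in
theorem exists_W (V : ℕ → List ℕ → Prop) (E L : ℕ → ℕ → Prop) : ∃ W : ℕ → Bool,
    (∀ x ρ, W (aF x ρ) = true ↔ V x ρ) ∧ (∀ x y, W (aE x y) = true ↔ E x y) ∧
    (∀ x y, W (aL x y) = true ↔ L x y) := by
  refine ⟨fun n => decide (if n % 3 = 0 then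
    V (n / 3).unpair.1 (Denumerable.ofNat (List ℕ) (n / 3).unpair.2) else
    if n % 3 = 1 then E (n / 3).unpair.1 (n / 3).unpair.2 else
    L (n / 3).unpair.1 (n / 3).unpair.2), ?_, ?_, ?_⟩
  · intro x ρ
    have h1 : aF x ρ / 3 = Nat.pair x (Encodable.encode ρ) := by unfold aF; omega
    have h2 : aF x ρ % 3 = 0 := by unfold aF; omega
    simp [h1, h2]
  · intro x y
    have h1 : aE x y / 3 = Nat.pair x y := by unfold aE; omega
    have h2 : aE x y % 3 = 1 := by unfold aE; omega
    simp [h1, h2]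
  · intro x y
    have h1 : aL x y / 3 = Nat.pair x y := by unfold aL; omega
    have h2 : aL x y % 3 = 2 := by unfold aL; omega
    simp [h1, h2]

theorem mem_le_encode (l : List ℕ) : ∀ a ∈ l, a ≤ Encodable.encode l := by
  induction l with
  | nil => simp
  | cons b l ih =>
    intro a ha
    rw [Encodable.encode_list_cons]
    rcases List.mem_cons.1 ha with rfl | h
    · exact (Nat.left_le_pair _ _).trans (Nat.le_succ _)
    · exact ((ih a h).trans (Nat.right_le_pair _ _)).trans (Nat.le_succ _)

theorem look_le (ρ : List ℕ) (i : ℕ) : look ρ i ≤ Encodable.encode ρ := by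
  unfold look
  by_cases h : i < ρ.reverse.length
  · rw [List.getD_eq_getElem _ _ h]
    exact mem_le_encode _ _ (List.mem_reverse.1 (List.getElem_mem h))
  · rw [List.getD_eq_default _ _ (by omega)]
    exact Nat.zero_le _

section sem
variable {M : Type} [LA.Structure M]

def env (v : ℕ → M) (ρ : List ℕ) : Fin ρ.length → M := fun i => v (look ρ i)

theorem env_cons (v : ℕ → M) (c : ℕ) (ρ : List ℕ) :
    env v (c :: ρ) = (Fin.snoc (env v ρ) (v c) : Fin (ρ.length + 1) → M) := by
  funext i
  refine Fin.lastCases ?_ (fun j => ?_) i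
  · rw [Fin.snoc_last]
    simp [env, look]
  · rw [Fin.snoc_castSucc]
    simp only [env, look, List.reverse_cons, Fin.val_castSucc]
    congr 1
    rw [List.getD_append]
    simp

def Tr (v : ℕ → M) (x : ℕ) (ρ : List ℕ) : Prop :=
  (decF x ρ.length).Realize (default : Empty → M) (env v ρ)

def mlt (a b : M) : Prop := Structure.RelMap (L := LA) (M := M) ArithRel.lt ![a, b]

structure TH (v : ℕ → M) : Prop where
  z : v 0 = mz M
  o : v 1 = mo M
  a : ∀ a b, v (fad a b) = ma (v a) (v b)
  m : ∀ a b, v (fmu a b) = mm (v a) (v b)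

theorem TH.term {v : ℕ → M} (h : TH v) (ρ : List ℕ) (t : ℕ) :
    (decT ρ.length t).realize (Sum.elim (default : Empty → M) (env v ρ)) = v (tv ρ t) := by
  induction t using Nat.strong_induction_on with
  | _ t ih =>
    rcases t with _ | _ | m
    · rw [decT, tv, h.z]; exact realize_zeroc _
    · rw [decT, tv, h.o]; exact realize_onec _
    · have i1 := ih _ (un1_lt m 3 1)
      have i2 := ih _ (un2_lt m 3 1)
      rw [decT, tv]
      split_ifs with h1 h2 h3
      · rfl
      · have : look ρ (m / 3) = 0 := by
          unfold look
          rw [List.getD_eq_default _ _ (by simpa using h2)]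
        rw [this, h.z]; exact realize_zeroc _
      · rw [h.a, ← i1, ← i2]; exact realize_add2 _ _ _
      · rw [h.m, ← i1, ← i2]; exact realize_mul2 _ _ _

theorem Tr_bot (v : ℕ → M) (ρ : List ℕ) : ¬ Tr v 0 ρ := by
  unfold Tr; rw [decF]; exact id

theorem Tr_eq {v : ℕ → M} (h : TH v) (a b : ℕ) (ρ : List ℕ) :
    Tr v (4 * Nat.pair a b + 1) ρ ↔ v (tv ρ a) = v (tv ρ b) := by
  unfold Tr
  rw [decF, if_pos (by omega), ← h.term, ← h.term]
  have h1 : (4 * Nat.pair a b) / 4 = Nat.pair a b := by omega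
  rw [h1, Nat.unpair_pair]
  rfl

theorem Tr_lt {v : ℕ → M} (h : TH v) (a b : ℕ) (ρ : List ℕ) :
    Tr v (4 * Nat.pair a b + 2) ρ ↔ mlt (v (tv ρ a)) (v (tv ρ b)) := by
  unfold Tr
  rw [decF, if_neg (by omega), if_pos (by omega), ← h.term, ← h.term]
  have h1 : (4 * Nat.pair a b + 1) / 4 = Nat.pair a b := by omega
  rw [h1, Nat.unpair_pair, fa, mlt]
  change Structure.RelMap (L := LA) (M := M) ArithRel.lt _ ↔ _
  apply iff_of_eq
  congr 1
  funext i
  fin_cases i <;> rfl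

theorem Tr_imp (v : ℕ → M) (a b : ℕ) (ρ : List ℕ) :
    Tr v (4 * Nat.pair a b + 3) ρ ↔ (Tr v a ρ → Tr v b ρ) := by
  unfold Tr
  rw [decF, if_neg (by omega), if_neg (by omega), if_pos (by omega)]
  have h1 : (4 * Nat.pair a b + 2) / 4 = Nat.pair a b := by omega
  rw [h1, Nat.unpair_pair, BoundedFormula.realize_imp]

theorem Tr_all (v : ℕ → M) (a : ℕ) (ρ : List ℕ) :
    Tr v (4 * a + 4) ρ ↔ ∀ z : M, (decF a (ρ.length + 1)).Realize (default : Empty → M)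
      (Fin.snoc (env v ρ) z) := by
  unfold Tr
  rw [decF, if_neg (by omega), if_neg (by omega), if_neg (by omega)]
  have h1 : (4 * a + 3) / 4 = a := by omega
  rw [h1, BoundedFormula.realize_all]

theorem Tr_cons (v : ℕ → M) (a c : ℕ) (ρ : List ℕ) :
    Tr v a (c :: ρ) ↔ (decF a (ρ.length + 1)).Realize (default : Empty → M)
      (Fin.snoc (env v ρ) (v c)) := by
  rw [← env_cons]
  rfl

theorem Tr_nil (v : ℕ → M) (a : ℕ) : Tr v a [] ↔ M ⊨ (decF a 0 : LA.Sentence) := by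
  unfold Tr Sentence.Realize Formula.Realize
  apply iff_of_eq
  congr 1
  funext i
  exact i.elim0

variable (M) in
open Classical in
noncomputable def hv : ℕ → M
  | 0 => mz M
  | 1 => mo M
  | m + 2 =>
    have := un1_lt m 3 1
    have := un2_lt m 3 1
    if m % 3 = 0 then ma (hv (m / 3).unpair.1) (hv (m / 3).unpair.2)
    else if m % 3 = 1 then mm (hv (m / 3).unpair.1) (hv (m / 3).unpair.2)
    else @Classical.epsilon M ⟨mz M⟩ (fun z =>
      ¬ (decF (m / 3).unpair.1
        ((Denumerable.ofNat (List ℕ) (m / 3).unpair.2).length + 1)).Realize (default : Empty → M)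
        (Fin.snoc (fun i => if h : look (Denumerable.ofNat (List ℕ) (m / 3).unpair.2) i < m + 2
          then hv (look (Denumerable.ofNat (List ℕ) (m / 3).unpair.2) i) else mz M) z))

theorem hv_th : TH (hv M) := by
  constructor
  · rw [hv]
  · rw [hv]
  · intro a b
    have h1 : (3 * Nat.pair a b) / 3 = Nat.pair a b := by omega
    rw [fad, hv, if_pos (by omega), h1, Nat.unpair_pair]
  · intro a b
    have h1 : (3 * Nat.pair a b + 1) / 3 = Nat.pair a b := by omega
    rw [fmu, hv, if_neg (by omega), if_pos (by omega), h1, Nat.unpair_pair]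

theorem hv_wit (a : ℕ) (ρ : List ℕ) : hv M (wit a ρ) = @Classical.epsilon M ⟨mz M⟩ (fun z =>
      ¬ (decF a (ρ.length + 1)).Realize (default : Empty → M) (Fin.snoc (env (hv M) ρ) z)) := by
  have h1 : (3 * Nat.pair a (Encodable.encode ρ) + 2) / 3 = Nat.pair a (Encodable.encode ρ) := by
    omega
  rw [wit, hv, if_neg (by omega), if_neg (by omega)]
  have h2 : ∀ i, look ρ i < 3 * Nat.pair a (Encodable.encode ρ) + 2 + 2 := by
    intro i
    have := look_le ρ i
    have := Nat.right_le_pair a (Encodable.encode ρ)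
    omega
  have key : ∀ (y : ℕ) (τ : List ℕ), y = a → τ = ρ →
      @Classical.epsilon M ⟨mz M⟩ (fun z => ¬ (decF y (τ.length + 1)).Realize (default : Empty → M)
        (Fin.snoc (fun i => if look τ i < 3 * Nat.pair a (Encodable.encode ρ) + 2 + 2
          then hv M (look τ i) else mz M) z)) = @Classical.epsilon M ⟨mz M⟩ (fun z =>
      ¬ (decF a (ρ.length + 1)).Realize (default : Empty → M) (Fin.snoc (env (hv M) ρ) z)) := by
    intro y τ e1 e2
    subst e1 e2
    simp only [h2, if_true]
    rfl
  exact key _ _ (by rw [h1, Nat.unpair_pair]) (by rw [h1, Nat.unpair_pair, Denumerable.ofNat_encode])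

theorem hk_of_model (M : Type) [LA.Structure M] : Hk (Tr (hv M)) (fun a b => hv M a = hv M b)
    (fun a b => mlt (hv M a) (hv M b)) where
  bot := Tr_bot _
  eq := Tr_eq hv_th
  lt := Tr_lt hv_th
  imp := Tr_imp _
  all1 := fun a c ρ h => by
    rw [Tr_all] at h
    rw [Tr_cons]
    exact h _
  all2 := fun a ρ h => by
    rw [Tr_all]
    rw [Tr_cons, hv_wit] at h
    by_contra hc
    push Not at hc
    exact Classical.epsilon_spec hc h
  refl := fun _ => rfl
  symm := fun _ _ h => h.symm
  trans := fun _ _ _ h h' => h.trans h'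
  add := fun a b c d h h' => by rw [hv_th.a, hv_th.a, h, h']
  mul := fun a b c d h h' => by rw [hv_th.m, hv_th.m, h, h']
  ltc := fun a b c d h h' => by rw [h, h']; exact id

end sem

theorem model_of_hk {V : ℕ → List ℕ → Prop} {E L : ℕ → ℕ → Prop} (H : Hk V E L) :
    ∃ (M : Type) (_ : LA.Structure M) (v : ℕ → M), ∀ x ρ, V x ρ ↔ Tr v x ρ := by
  let s : Setoid ℕ := ⟨E, H.refl, fun {a b} => H.symm a b, fun {a b c} => H.trans a b c⟩
  let M := Quotient s
  let v : ℕ → M := Quotient.mk s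
  let fa : M → M → M := Quotient.map₂ fad (fun a b h c d h' => H.add a b c d h h')
  let fm : M → M → M := Quotient.map₂ fmu (fun a b h c d h' => H.mul a b c d h h')
  let fl : M → M → Prop := fun p q => Quotient.liftOn₂ p q L (fun a c b d h h' =>
    propext ⟨H.ltc a b c d h h', H.ltc b a d c (H.symm _ _ h) (H.symm _ _ h')⟩)
  let str : LA.Structure M :=
    { funMap := fun {_} f => match f with
        | .zero => fun _ => v 0
        | .one => fun _ => v 1
        | .add => fun w => fa (w 0) (w 1)
        | .mul => fun w => fm (w 0) (w 1)
      RelMap := fun {_} r => match r with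
        | .lt => fun w => fl (w 0) (w 1) }
  refine ⟨M, str, v, ?_⟩
  have hT : TH v := ⟨rfl, rfl, fun _ _ => rfl, fun _ _ => rfl⟩
  intro x
  induction x using Nat.strong_induction_on with
  | _ x ih =>
    intro ρ
    rcases x with _ | m
    · exact iff_of_false (H.bot ρ) (Tr_bot v ρ)
    · have hp : Nat.pair (m / 4).unpair.1 (m / 4).unpair.2 = m / 4 := Nat.pair_unpair _
      have i1 := ih _ (un1_lt m 4 0)
      have i2 := ih _ (un2_lt m 4 0)
      have i3 := ih (m / 4) (by omega)
      generalize (m / 4).unpair.1 = a at *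
      generalize (m / 4).unpair.2 = b at *
      have hm : m % 4 = 0 ∨ m % 4 = 1 ∨ m % 4 = 2 ∨ m % 4 = 3 := by omega
      rcases hm with hm | hm | hm | hm
      · have : m + 1 = 4 * Nat.pair a b + 1 := by omega
        rw [this, H.eq, Tr_eq hT]
        exact (Quotient.eq (r := s)).symm
      · have : m + 1 = 4 * Nat.pair a b + 2 := by omega
        rw [this, H.lt, Tr_lt hT]
        exact Iff.rfl
      · have : m + 1 = 4 * Nat.pair a b + 3 := by omega
        rw [this, H.imp, Tr_imp, i1, i2]
      · have : m + 1 = 4 * (m / 4) + 4 := by omega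
        rw [this, Tr_all]
        constructor
        · intro h z
          obtain ⟨c, rfl⟩ := Quotient.exists_rep z
          rw [← Tr_cons v, ← i3]
          exact H.all1 _ _ _ h
        · intro h
          apply H.all2
          rw [i3, Tr_cons]
          exact h _

theorem refut_cls_iff {T : LA.Theory} {tk : ℕ → ℕ → ℕ}
    (hT : ∀ φ : LA.Sentence, φ ∈ T ↔ ∃ k, tk k (godelCode φ) ≠ 0) (b : Bool) (x : ℕ) :
    (∃ N, Refut (cls tk b x) N) ↔ ¬ ∃ (M : Type) (_ : LA.Structure M),
      (∀ φ ∈ T, M ⊨ φ) ∧ ((M ⊨ (decF x 0 : LA.Sentence)) ↔ b = true) := by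
  rw [refut_iff, not_iff_not]
  simp only [sat_cls_iff]
  constructor
  · rintro ⟨W, H, h1, h2⟩
    obtain ⟨M, str, v, hv⟩ := model_of_hk H
    refine ⟨M, str, ?_, ?_⟩
    · intro φ hφ
      obtain ⟨k, hk⟩ := (hT φ).1 hφ
      obtain ⟨y, rfl⟩ := decF_surj φ
      rw [godelCode_decF] at hk
      rw [← Tr_nil v, ← hv]
      exact h2 y k hk
    · rw [← Tr_nil v, ← hv, h1]
  · rintro ⟨M, str, h1, h2⟩
    obtain ⟨W, w1, w2, w3⟩ := exists_W (Tr (hv M)) (fun a b => hv M a = hv M b)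
      (fun a b => mlt (hv M a) (hv M b))
    refine ⟨W, ?_, ?_, ?_⟩
    · simp only [w1, w2, w3]
      exact hk_of_model M
    · have : W (aF x []) = true ↔ b = true := by rw [w1, Tr_nil]; exact h2
      rwa [← Bool.eq_iff_iff] at this
    · intro y k hk
      rw [w1, Tr_nil]
      exact h1 _ ((hT _).2 ⟨k, by rwa [godelCode_decF]⟩)

theorem models_iff (T : LA.Theory) (φ : LA.Sentence) :
    (T ⊨ᵇ φ) ↔ ∀ (M : Type) (_ : LA.Structure M), (∀ ψ ∈ T, M ⊨ ψ) → M ⊨ φ := by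
  rw [Theory.models_sentence_iff]
  constructor
  · intro h M _ hM
    have : M ⊨ T := ⟨hM⟩
    have : Nonempty M := ⟨mz M⟩
    exact h (Theory.ModelType.of T M)
  · intro h M
    exact h M _ M.is_model.realize_of_mem

theorem godelCode_inj {φ ψ : LA.Sentence} (h : godelCode φ = godelCode ψ) : φ = ψ := by
  have h1 : φ.listEncode = ψ.listEncode := Encodable.encode_injective h
  have := BoundedFormula.listEncode_sigma_injective (L := LA) (α := Empty)
    (a₁ := ⟨0, φ⟩) (a₂ := ⟨0, ψ⟩) h1
  simpa using this

theorem realize_diag {M : Type} [LA.Structure M] (q : QAx M) (Ψ : LA.Formula (Fin 1))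
    (θ : LA.Sentence) : (M ⊨ diagBicond Ψ θ) ↔
      (Ψ.Realize (fun _ => iot M (godelCode θ)) ↔ M ⊨ θ) := by
  unfold diagBicond Sentence.Realize Formula.Realize
  rw [BoundedFormula.realize_iff, BoundedFormula.realize_subst]
  simp only [q.numeral_eq]

theorem sg_codes {T : LA.Theory} (hre : RETheory T) (b : Bool) :
    Sg (fun v => ∃ θ : LA.Sentence, v 0 = godelCode θ ∧ ¬ ∃ (M : Type) (_ : LA.Structure M),
      (∀ φ ∈ T, M ⊨ φ) ∧ ((M ⊨ θ) ↔ b = true)) := by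
  obtain ⟨f, hf, hT⟩ := hre
  obtain ⟨tk, htk, hk⟩ := exists_tk f hf
  have hT' : ∀ φ : LA.Sentence, φ ∈ T ↔ ∃ k, tk k (godelCode φ) ≠ 0 :=
    fun φ => (hT φ).trans (hk _)
  refine (sg_of_re (re_codes htk b) 0).of_iff (fun v => ?_)
  constructor
  · rintro ⟨x, N, h1, h2⟩
    exact ⟨decF x 0, by rw [h1, godelCode_decF], (refut_cls_iff hT' b x).1 ⟨N, h2⟩⟩
  · rintro ⟨θ, h1, h2⟩
    obtain ⟨x, rfl⟩ := decF_surj θ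
    obtain ⟨N, hN⟩ := (refut_cls_iff hT' b x).2 h2
    exact ⟨x, N, by rw [h1, godelCode_decF], hN⟩

/-- **The Weak Diagonal Lemma implies Rosser's Theorem.** If `T` is a consistent
recursively enumerable extension of Robinson's arithmetic satisfying the Weak
Diagonal Lemma, then some sentence is independent from `T`. -/
theorem stmt15 (T : LA.Theory) (hQ : Q ⊆ T) (hcons : Consistent T) (hre : RETheory T)
    (wdl : ∀ Ψ : LA.Formula (Fin 1), ∃ θ : LA.Sentence,
      Consistent (T ∪ {diagBicond Ψ θ})) :
    ∃ ρ : LA.Sentence, ¬ (T ⊨ᵇ ρ) ∧ ¬ (T ⊨ᵇ ∼ρ) := by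
  have cons_model : ∀ S : LA.Theory, Consistent S → ∃ (M : Type) (_ : LA.Structure M),
      ∀ φ ∈ S, M ⊨ φ := by
    intro S hS
    by_contra hc
    push Not at hc
    refine hS ((models_iff S _).2 fun M str hM => ?_)
    obtain ⟨φ, h1, h2⟩ := hc M str
    exact absurd (hM φ h1) h2
  have hneg : ∀ (M : Type) (_ : LA.Structure M) (φ : LA.Sentence), (M ⊨ (∼φ : LA.Sentence)) ↔ ¬ M ⊨ φ :=
    fun M _ φ => Sentence.realize_not M
  by_contra hno
  push Not at hno
  obtain ⟨Ψ, hΨ⟩ := rosser_sep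
    (A := fun n => ∃ θ : LA.Sentence, n = godelCode θ ∧ ¬ ∃ (M : Type) (_ : LA.Structure M),
      (∀ φ ∈ T, M ⊨ φ) ∧ ((M ⊨ θ) ↔ true = true))
    (B := fun n => ∃ θ : LA.Sentence, n = godelCode θ ∧ ¬ ∃ (M : Type) (_ : LA.Structure M),
      (∀ φ ∈ T, M ⊨ φ) ∧ ((M ⊨ θ) ↔ false = true))
    (sg_codes hre true) (sg_codes hre false) (by
    rintro n ⟨θ, h1, h2⟩ ⟨θ', h1', h2'⟩
    obtain rfl := godelCode_inj (h1.symm.trans h1')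
    obtain ⟨M, str, hM⟩ := cons_model T hcons
    by_cases h : M ⊨ θ
    · exact h2 ⟨M, str, hM, by simpa using h⟩
    · exact h2' ⟨M, str, hM, by simpa using h⟩)
  obtain ⟨θ, hθ⟩ := wdl Ψ
  obtain ⟨M, str, hM⟩ := cons_model _ hθ
  have hMT : ∀ φ ∈ T, M ⊨ φ := fun φ hφ => hM φ (Or.inl hφ)
  have hMd := hM _ (Or.inr rfl)
  have q : QAx M := qax_of_model ⟨fun φ hφ => hMT φ (hQ hφ)⟩
  rw [realize_diag q] at hMd
  obtain ⟨p1, p2⟩ := hΨ M q (godelCode θ)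
  by_cases hT : T ⊨ᵇ θ
  · have hth := (models_iff T θ).1 hT
    refine p2 ⟨θ, rfl, ?_⟩ (hMd.2 (hth M str hMT))
    rintro ⟨N, _, h1, h2⟩
    simpa using h2.1 (hth N _ h1)
  · have hth := (models_iff T _).1 (hno θ hT)
    refine (hneg M _ θ).1 (hth M str hMT) (hMd.1 (p1 ⟨θ, rfl, ?_⟩))
    rintro ⟨N, _, h1, h2⟩
    exact (hneg N _ θ).1 (hth N _ h1) (h2.2 rfl)
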